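/- arXiv:1309.1433 — 9 statements merged into one kernel-verified Lean document; each statement's English description precedes it below -/
import Mathlib

section
/- For any two linearly independent unit vectors a, b in ℝ² and any η > 0, there exists a real symmetric positive definite 2×2 matrix C such that aᵀ C⁻¹ b ≤ −η. -/
open Matrix

/-!
Take `C = D⁻¹` with `D = 1 + t v vᵀ` and `v = a - b`. For `c = a ⬝ᵥ b` one has
`a ⬝ᵥ v = 1 - c = -(b ⬝ᵥ v)`, hence `aᵀ D b = c - t (1 - c)²`. Independence gives `a ≠ b`, so
`0 < v ⬝ᵥ v = 2 (1 - c)`, and `t = (1 + η) / (1 - c)²` yields `aᵀ D b = c - 1 - η ≤ -η`.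
-/

/-- For any two linearly independent unit vectors `a, b` in `ℝ²` and any `η > 0`, there
exists a real symmetric positive definite `2×2` matrix `C` such that `aᵀ C⁻¹ b ≤ -η`. -/
theorem exists_posDef_matrix_inv_inner_le_neg
    (a b : Fin 2 → ℝ) (ha : a ⬝ᵥ a = 1) (hb : b ⬝ᵥ b = 1)
    (hab : LinearIndependent ℝ ![a, b]) (η : ℝ) (hη : 0 < η) :
    ∃ C : Matrix (Fin 2) (Fin 2) ℝ, Cᵀ = C ∧ C.PosDef ∧ a ⬝ᵥ (C⁻¹ *ᵥ b) ≤ -η := by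
  have hne : a ≠ b := fun h => by
    have h01 : (0 : Fin 2) = 1 := hab.injective (by simpa using h)
    exact absurd h01 (by decide)
  have hc : a ⬝ᵥ b < 1 := by
    have h0 : 0 < (a - b) ⬝ᵥ (a - b) := by
      have := dotProduct_star_self_pos_iff.2 (sub_ne_zero.2 hne)
      simpa using this
    rw [sub_dotProduct, dotProduct_sub, dotProduct_sub, dotProduct_comm b a, ha, hb] at h0
    linarith
  have hc0 : 1 - a ⬝ᵥ b ≠ 0 := by linarith
  set t : ℝ := (1 + η) / (1 - a ⬝ᵥ b) ^ 2 with ht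
  have ht0 : 0 ≤ t := by positivity
  set D : Matrix (Fin 2) (Fin 2) ℝ := 1 + t • vecMulVec (a - b) (a - b) with hD
  have hDpos : D.PosDef := by
    refine PosDef.one.add_posSemidef (PosSemidef.smul ?_ ht0)
    simpa using posSemidef_vecMulVec_self_star (a - b)
  have hCpos : D⁻¹.PosDef := hDpos.inv
  refine ⟨D⁻¹, ?_, hCpos, ?_⟩
  · simpa [IsHermitian, conjTranspose_eq_transpose_of_trivial] using hCpos.isHermitian
  · rw [nonsing_inv_nonsing_inv D ((isUnit_iff_isUnit_det D).1 hDpos.isUnit)]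
    have key : a ⬝ᵥ (D *ᵥ b) = a ⬝ᵥ b - t * (1 - a ⬝ᵥ b) ^ 2 := by
      have h1 : a ⬝ᵥ (D *ᵥ b) = a ⬝ᵥ b + t * ((a ⬝ᵥ (a - b)) * ((a - b) ⬝ᵥ b)) := by
        simp [hD, add_mulVec, smul_mulVec, vecMulVec_mulVec, dotProduct_add, mul_comm]
      rw [h1, dotProduct_sub, sub_dotProduct, ha, hb]
      ring
    rw [key, ht, div_mul_cancel₀ _ (pow_ne_zero 2 hc0)]
    linarith
end

section
/- For any finite set N of vectors in ℝ², there exist two linearly independent unit vectors a and b in ℝ² such that (n · a)(n · b) ≥ 0 for every n ∈ N. -/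
open Matrix

/-! Take `a = (1, 0)` and `b = (cos t, sin t)` with `t > 0` small. For `n = (x, y)` the product is
`x * (x * cos t + y * sin t)`: it vanishes if `x = 0`, and otherwise tends to `x ^ 2 > 0` as
`t → 0`. Since `N` is finite, one `t` serves all `n ∈ N`. -/

/-- For any finite set `N` of vectors in `ℝ²`, there exist two linearly independent unit
vectors `a` and `b` such that `(n · a) * (n · b) ≥ 0` for every `n ∈ N`. -/
theorem exists_indep_unit_vectors_dotProduct_mul_nonneg (N : Finset (Fin 2 → ℝ)) :
    ∃ a b : Fin 2 → ℝ, a ⬝ᵥ a = 1 ∧ b ⬝ᵥ b = 1 ∧ LinearIndependent ℝ ![a, b] ∧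
      ∀ n ∈ N, 0 ≤ (n ⬝ᵥ a) * (n ⬝ᵥ b) := by
  have hN : ∀ᶠ t : ℝ in nhdsWithin 0 (Set.Ioi 0),
      ∀ n ∈ N, 0 ≤ n 0 * (n 0 * Real.cos t + n 1 * Real.sin t) := by
    rw [Filter.eventually_all_finset]
    intro n _
    by_cases h : n 0 = 0
    · simp [h]
    · have hc : ContinuousAt
          (fun t : ℝ => n 0 * (n 0 * Real.cos t + n 1 * Real.sin t)) 0 := by fun_prop
      have hpos : 0 < n 0 * (n 0 * Real.cos 0 + n 1 * Real.sin 0) := by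
        simpa using h
      exact ((hc.eventually (lt_mem_nhds hpos)).mono fun _ => le_of_lt).filter_mono
        nhdsWithin_le_nhds
  obtain ⟨t, ht, ht0, htpi⟩ := (hN.and (Ioo_mem_nhdsGT Real.pi_pos)).exists
  have hs : Real.sin t ≠ 0 := (Real.sin_pos_of_pos_of_lt_pi ht0 htpi).ne'
  refine ⟨![1, 0], ![Real.cos t, Real.sin t], by simp, ?_, ?_, fun n hn => ?_⟩
  · simp [← sq]
  · rw [LinearIndependent.pair_iff]
    intro c d h
    have h0 := congrFun h 0
    have h1 := congrFun h 1
    simp [hs] at h0 h1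
    simpa [h1] using h0
  · simpa [dotProduct, Fin.sum_univ_two] using ht n hn
end

section
/- Let φ : ℝ² → ℝ be a C^∞ function with compact support, let a, b ∈ ℝ² and α₀, β₀ > 0, and define Ψ(x) = ∫₀¹∫₀¹ φ(x − t α₀ a − t′ β₀ b) dt dt′. Then Ψ is C^∞ with compact support, Ψ is nonnegative whenever φ is nonnegative, and for every x ∈ ℝ² one has D²Ψ(x)[a,b] = (φ(x − α₀a − β₀b) − φ(x − β₀b) − φ(x − α₀a) + φ(x))/(α₀ β₀), i.e. D²Ψ(x)[a,b] = φ_{α₀,β₀,−a,−b}(φ)(x). -/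
/-!
For a vector `v`, let `segAvg v f` be the average of `f` over the segment from `x - v` to `x`.
Then `Ψ = segAvg (α₀ • a) (segAvg (β₀ • b) φ)`, so everything follows from properties of one
averaging operator on smooth compactly supported functions: differentiation under the integral
gives `D (segAvg v f) = segAvg v (D f)`, hence `segAvg` preserves smoothness
(`segAvg_contDiff`), it preserves compact support because the support is only thickened by a
segment (`segAvg_hasCompactSupport`), and the fundamental theorem of calculus gives
`D (segAvg v f) x v = f x - f (x - v)` (`fderiv_segAvg_self`).

For the second derivative, `D Ψ · b` is the average along `α₀ • a` of the function
`D (segAvg (β₀ • b) φ) · b`, which is `(φ y - φ (y - β₀ • b)) / β₀`; differentiating in the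
direction `a` produces the second difference quotient.
-/

section SegAvg

variable {E F : Type} [NormedAddCommGroup E] [NormedSpace ℝ E]
  [NormedAddCommGroup F] [NormedSpace ℝ F]

/-- The average of `f` over the segment from `x` to `x - v`, parametrised by `t ∈ [0, 1]`. -/
noncomputable def segAvg (v : E) (f : E → F) (x : E) : F :=
  ∫ t in (0:ℝ)..1, f (x - t • v)

theorem segAvg_continuous (v : E) {f : E → F} (hf : Continuous f) :
    Continuous (segAvg v f) := by
  unfold segAvg
  apply intervalIntegral.continuous_parametric_intervalIntegral_of_continuous'
  fun_prop

theorem segAvg_hasCompactSupport (v : E) {f : E → F} (hf : HasCompactSupport f) :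
    HasCompactSupport (segAvg v f) := by
  have hK : IsCompact ((fun p : E × ℝ => p.1 + p.2 • v) '' (tsupport f ×ˢ Set.Icc (0:ℝ) 1)) :=
    (hf.isCompact.prod isCompact_Icc).image (by fun_prop)
  refine HasCompactSupport.intro hK fun x hx => ?_
  unfold segAvg
  rw [intervalIntegral.integral_congr (g := fun _ => (0 : F)), intervalIntegral.integral_zero]
  intro t ht
  rw [Set.uIcc_of_le zero_le_one] at ht
  by_contra h
  exact hx ⟨(x - t • v, t), ⟨subset_tsupport f h, ht⟩, by simp⟩

theorem segAvg_hasFDerivAt (v : E) {f : E → F} (hf : ContDiff ℝ 1 f)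
    (hs : HasCompactSupport f) (x : E) :
    HasFDerivAt (segAvg v f) (segAvg v (fderiv ℝ f) x) x := by
  have hc := hf.continuous
  have hc' : Continuous (fderiv ℝ f) := hf.continuous_fderiv one_ne_zero
  obtain ⟨C, hC⟩ := (hs.fderiv ℝ).exists_bound_of_continuous hc'
  unfold segAvg
  refine intervalIntegral.hasFDerivAt_integral_of_dominated_of_fderiv_le
    (F := fun x t => f (x - t • v)) (F' := fun x t => fderiv ℝ f (x - t • v))
    (bound := fun _ => C) (s := Set.univ) Filter.univ_mem ?_ ?_ ?_ ?_ ?_ ?_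
  · refine Filter.Eventually.of_forall fun y => Continuous.aestronglyMeasurable ?_
    fun_prop
  · refine Continuous.intervalIntegrable ?_ _ _
    fun_prop
  · have : SecondCountableTopologyEither ℝ (E →L[ℝ] F) := ⟨Or.inl inferInstance⟩
    refine Continuous.aestronglyMeasurable ?_
    fun_prop
  · exact Filter.Eventually.of_forall fun t _ y _ => hC _
  · exact intervalIntegrable_const
  · refine Filter.Eventually.of_forall fun t _ y _ => ?_
    have h := ((hf.differentiable one_ne_zero) (y - t • v)).hasFDerivAt.comp y
      ((hasFDerivAt_id y).sub_const (t • v))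
    rwa [ContinuousLinearMap.comp_id] at h

theorem fderiv_segAvg (v : E) {f : E → F} (hf : ContDiff ℝ 1 f)
    (hs : HasCompactSupport f) : fderiv ℝ (segAvg v f) = segAvg v (fderiv ℝ f) :=
  funext fun x => (segAvg_hasFDerivAt v hf hs x).fderiv

theorem segAvg_contDiff_nat (n : ℕ) : ∀ {F : Type} [NormedAddCommGroup F] [NormedSpace ℝ F]
    (v : E) {f : E → F}, ContDiff ℝ n f → HasCompactSupport f → ContDiff ℝ n (segAvg v f) := by
  induction n with
  | zero =>
    intro F _ _ v f hf _
    exact contDiff_zero.2 (segAvg_continuous v hf.continuous)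
  | succ n ih =>
    intro F _ _ v f hf hs
    push_cast at hf ⊢
    refine contDiff_succ_iff_hasFDerivAt.2 ⟨segAvg v (fderiv ℝ f), ?_, fun x => ?_⟩
    · exact ih v (hf.fderiv_right le_rfl) (hs.fderiv ℝ)
    · exact segAvg_hasFDerivAt v (hf.of_le (by simp)) hs x

theorem segAvg_contDiff (v : E) {f : E → F} (hf : ContDiff ℝ (⊤ : ℕ∞) f)
    (hs : HasCompactSupport f) : ContDiff ℝ (⊤ : ℕ∞) (segAvg v f) :=
  contDiff_infty.2 fun n => segAvg_contDiff_nat n v (contDiff_infty.1 hf n) hs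

/-- Evaluating an averaged family of linear maps at a fixed vector commutes with averaging. -/
theorem segAvg_clm_apply (v w : E) {g : E → E →L[ℝ] F} (hg : Continuous g)
    [CompleteSpace F] (x : E) :
    segAvg v g x w = segAvg v (fun y => g y w) x := by
  unfold segAvg
  refine ContinuousLinearMap.intervalIntegral_apply (Continuous.intervalIntegrable ?_ _ _) w
  fun_prop

theorem fderiv_segAvg_self [CompleteSpace F] (v : E) {f : E → F} (hf : ContDiff ℝ 1 f)
    (hs : HasCompactSupport f) (x : E) :
    fderiv ℝ (segAvg v f) x v = f x - f (x - v) := by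
  have hc' : Continuous (fderiv ℝ f) := hf.continuous_fderiv one_ne_zero
  rw [fderiv_segAvg v hf hs, segAvg_clm_apply v v hc']
  unfold segAvg
  have hd : ∀ t ∈ Set.uIcc (0:ℝ) 1,
      HasDerivAt (fun t : ℝ => -f (x - t • v)) (fderiv ℝ f (x - t • v) v) t := by
    intro t _
    have h1 : HasDerivAt (fun t : ℝ => x - t • v) (-v) t := by
      simpa using ((hasDerivAt_id t).smul_const v).const_sub x
    have h2 := ((hf.differentiable one_ne_zero) (x - t • v)).hasFDerivAt.comp_hasDerivAt t h1
    have h3 := h2.neg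
    rw [map_neg, neg_neg] at h3
    exact h3
  rw [intervalIntegral.integral_eq_sub_of_hasDerivAt hd
    (Continuous.intervalIntegrable (by fun_prop) _ _)]
  simp only [one_smul, zero_smul, sub_zero]
  abel

/-- The directional derivative of the average along `c • w`, in the direction `w`, is the
backward difference quotient with step `c`. -/
theorem fderiv_segAvg_smul (w : E) {c : ℝ} (hc : c ≠ 0) {f : E → ℝ} (hf : ContDiff ℝ 1 f)
    (hs : HasCompactSupport f) (x : E) :
    fderiv ℝ (segAvg (c • w) f) x w = (f x - f (x - c • w)) / c := by
  have h := fderiv_segAvg_self (c • w) hf hs x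
  rw [map_smul, smul_eq_mul] at h
  rw [eq_div_iff hc, ← h, mul_comm]

end SegAvg

/-- If `φ` is a smooth compactly supported function on `ℝ²` and
`Ψ(x) = ∫₀¹∫₀¹ φ(x − t α₀ a − t' β₀ b) dt dt'`, then `Ψ` is smooth with compact support,
nonnegative whenever `φ` is, and `D²Ψ(x)[a,b] = φ_{α₀,β₀,−a,−b}(φ)(x)`. -/
theorem testFunction_construction
    (φ : (Fin 2 → ℝ) → ℝ) (hφ : ContDiff ℝ (⊤ : ℕ∞) φ) (hsupp : HasCompactSupport φ)
    (a b : Fin 2 → ℝ) (α₀ β₀ : ℝ) (hα₀ : 0 < α₀) (hβ₀ : 0 < β₀)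
    (Ψ : (Fin 2 → ℝ) → ℝ)
    (hΨ : ∀ x, Ψ x = ∫ t in (0:ℝ)..1, ∫ t' in (0:ℝ)..1,
      φ (x - (t * α₀) • a - (t' * β₀) • b)) :
    ContDiff ℝ (⊤ : ℕ∞) Ψ ∧ HasCompactSupport Ψ ∧
      ((∀ x, 0 ≤ φ x) → ∀ x, 0 ≤ Ψ x) ∧
      ∀ x, iteratedFDeriv ℝ 2 Ψ x ![a, b] =
        (φ (x - α₀ • a - β₀ • b) - φ (x - β₀ • b) - φ (x - α₀ • a) + φ x)
          / (α₀ * β₀) := by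
  have hΨ' : Ψ = segAvg (α₀ • a) (segAvg (β₀ • b) φ) := by
    funext x
    simp only [hΨ, segAvg, smul_smul]
  have hG := segAvg_contDiff (β₀ • b) hφ hsupp
  have hGs := segAvg_hasCompactSupport (β₀ • b) hsupp
  have hΨc : ContDiff ℝ (⊤ : ℕ∞) Ψ := hΨ' ▸ segAvg_contDiff (α₀ • a) hG hGs
  have h1 : (1 : WithTop ℕ∞) ≤ ((⊤ : ℕ∞) : WithTop ℕ∞) := by exact_mod_cast le_top
  have h2 : (1 : WithTop ℕ∞) + 1 ≤ ((⊤ : ℕ∞) : WithTop ℕ∞) :=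
    WithTop.coe_le_coe.2 (le_top : (1 + 1 : ℕ∞) ≤ ⊤)
  refine ⟨hΨc, hΨ' ▸ segAvg_hasCompactSupport (α₀ • a) hGs, fun hpos x => ?_, fun x => ?_⟩
  · rw [hΨ]
    exact intervalIntegral.integral_nonneg zero_le_one fun t _ =>
      intervalIntegral.integral_nonneg zero_le_one fun t' _ => hpos _
  · have hDG : ContDiff ℝ 1 (fderiv ℝ (segAvg (β₀ • b) φ)) := hG.fderiv_right h2
    -- `D Ψ · b` is itself an average along `α₀ • a`
    have hb : (fun y => fderiv ℝ Ψ y b) =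
        segAvg (α₀ • a) (fun y => fderiv ℝ (segAvg (β₀ • b) φ) y b) := by
      funext y
      rw [hΨ', fderiv_segAvg _ (hG.of_le h1) hGs, segAvg_clm_apply _ _ hDG.continuous]
    have hDΨ : DifferentiableAt ℝ (fderiv ℝ Ψ) x :=
      (hΨc.fderiv_right h2).differentiable one_ne_zero x
    have hswap : fderiv ℝ (fderiv ℝ Ψ) x a b = fderiv ℝ (fun y => fderiv ℝ Ψ y b) x a := by
      rw [fderiv_clm_apply hDΨ (differentiableAt_const b)]
      simp
    have hHs : HasCompactSupport (fun y => fderiv ℝ (segAvg (β₀ • b) φ) y b) :=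
      hGs.fderiv_apply ℝ b
    rw [iteratedFDeriv_two_apply]
    simp only [Matrix.cons_val_zero, Matrix.cons_val_one]
    rw [hswap, hb, fderiv_segAvg_smul a hα₀.ne' (hDG.clm_apply contDiff_const) hHs,
      fderiv_segAvg_smul b hβ₀.ne' (hφ.of_le h1) hsupp,
      fderiv_segAvg_smul b hβ₀.ne' (hφ.of_le h1) hsupp]
    field_simp
    ring
end

section
/- Let p₁, p₂, p₃, p₄ ∈ ℝ² be such that (p₁,p₂,p₃) and (p₁,p₂,p₄) are each affinely independent and p₃, p₄ lie strictly on opposite sides of the line through p₁ and p₂. Set T₁ = conv{p₁,p₂,p₃} and T₂ = conv{p₁,p₂,p₄}, and assume T₁ ∪ T₂ is convex. Let n be the unit vector orthogonal to p₂ − p₁ with n·(p₄ − p₁) > 0 (the unit normal to the common edge pointing from T₁ to T₂). Let u : ℝ² → ℝ and let f₁, f₂ be affine maps ℝ² → ℝ with constant gradients q₁, q₂ respectively, such that u = f₁ on T₁, u = f₂ on T₂, and f₁ = f₂ on the segment [p₁, p₂]. Then u is convex on T₁ ∪ T₂ if and only if (q₂ − q₁)·n ≥ 0. -/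
open RealInnerProductSpace

/-!
Write `s x = ⟪n, x - p₁⟫` for the signed distance to the line through `p₁` and `p₂`, and
`J = ⟪q₂ - q₁, n⟫` for the gradient jump. Since `f₁` and `f₂` agree at `p₁` and `p₂`, the vector
`q₂ - q₁` is orthogonal to the edge, hence (dimension two) equal to `J • n`, so that
`f₂ x = f₁ x + J * s x` on the whole plane (`affine_sub_eq_jump_mul`). Moreover `s ≤ 0` on `T₁` and
`0 ≤ s` on `T₂`.

If `0 ≤ J`, then `u = max f₁ f₂` on `T₁ ∪ T₂`, a maximum of two affine functions, hence convex.
Conversely, let `z` be the point where the segment `[p₃, p₄]` crosses the line `s = 0`. There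
`u z = f₁ z = f₂ z`, and the convexity inequality for `p₃`, `p₄` at `z` reads
`f₁ z ≤ f₁ z + b * J * s p₄`, where `b > 0` is the weight of `p₄`. Hence `0 ≤ J`.
-/

/-- In the plane, two vectors orthogonal to the same nonzero vector are parallel; the
factor is an inner product because `n` has norm one. -/
lemma eq_inner_smul_of_orthogonal (q n d : EuclideanSpace ℝ (Fin 2)) (hd : d ≠ 0)
    (hn : ‖n‖ = 1) (hnd : ⟪n, d⟫ = 0) (hqd : ⟪q, d⟫ = 0) : q = ⟪q, n⟫ • n := by
  have hnn : ⟪n, n⟫ = 1 := by rw [real_inner_self_eq_norm_sq, hn]; norm_num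
  simp only [PiLp.inner_apply, Fin.sum_univ_two, RCLike.inner_apply, conj_trivial] at *
  -- The determinant of `q` and `n` vanishes, because it does so after multiplication
  -- by either coordinate of `d`.
  have hdet : q 0 * n 1 - q 1 * n 0 = 0 := by
    by_contra hne
    apply hd
    have h0 : (q 0 * n 1 - q 1 * n 0) * d 0 = 0 := by linear_combination n 1 * hqd - q 1 * hnd
    have h1 : (q 0 * n 1 - q 1 * n 0) * d 1 = 0 := by linear_combination q 0 * hnd - n 0 * hqd
    ext i
    fin_cases i
    · simpa [hne] using h0
    · simpa [hne] using h1
  ext i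
  fin_cases i
  · simp only [Fin.zero_eta, PiLp.smul_apply, smul_eq_mul]
    linear_combination n 1 * hdet - q 0 * hnn
  · simp only [Fin.mk_one, PiLp.smul_apply, smul_eq_mul]
    linear_combination -n 0 * hdet - q 1 * hnn

/-- Two affine functions on the plane that agree at `p₁` and `p₂` differ by the gradient jump
times the signed distance to the line through these points. -/
lemma affine_sub_eq_jump_mul (p₁ p₂ n q₁ q₂ : EuclideanSpace ℝ (Fin 2)) (c₁ c₂ : ℝ)
    (hne : p₁ ≠ p₂) (hn : ‖n‖ = 1) (hnd : ⟪n, p₂ - p₁⟫ = 0)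
    (e₁ : ⟪q₁, p₁⟫ + c₁ = ⟪q₂, p₁⟫ + c₂) (e₂ : ⟪q₁, p₂⟫ + c₁ = ⟪q₂, p₂⟫ + c₂)
    (x : EuclideanSpace ℝ (Fin 2)) :
    ⟪q₂, x⟫ + c₂ = ⟪q₁, x⟫ + c₁ + ⟪q₂ - q₁, n⟫ * ⟪n, x - p₁⟫ := by
  have hqd : ⟪q₂ - q₁, p₂ - p₁⟫ = 0 := by
    simp only [inner_sub_left, inner_sub_right]
    linarith
  have hq := eq_inner_smul_of_orthogonal (q₂ - q₁) n (p₂ - p₁)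
    (sub_ne_zero.2 hne.symm) hn hnd hqd
  have hx : ⟪q₂ - q₁, x - p₁⟫ = ⟪q₂ - q₁, n⟫ * ⟪n, x - p₁⟫ := by
    conv_lhs => rw [hq]
    rw [real_inner_smul_left]
  rw [← hx]
  simp only [inner_sub_left, inner_sub_right]
  linarith

lemma inner_sub_nonneg_of_mem_triangle {p₁ p₂ p n x : EuclideanSpace ℝ (Fin 2)}
    (h₂ : 0 ≤ ⟪n, p₂ - p₁⟫) (h : 0 ≤ ⟪n, p - p₁⟫) (hx : x ∈ convexHull ℝ {p₁, p₂, p}) :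
    0 ≤ ⟪n, x - p₁⟫ := by
  have hc : Convex ℝ {y : EuclideanSpace ℝ (Fin 2) | ⟪n, p₁⟫ ≤ ⟪n, y⟫} :=
    convex_halfSpace_ge (innerₗ _ n).isLinear _
  rw [inner_sub_right, sub_nonneg] at *
  refine convexHull_min ?_ hc hx
  simp only [Set.insert_subset_iff, Set.singleton_subset_iff, Set.mem_ofPred_eq]
  exact ⟨le_rfl, h₂, h⟩

/-- A continuous piecewise affine function on two adjacent triangles whose union is convex
is convex if and only if the jump of its gradient across the common edge, in the direction
of the unit normal pointing from the first triangle to the second, is nonnegative. -/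
theorem piecewise_affine_convex_iff_gradient_jump_nonneg
    (p₁ p₂ p₃ p₄ : EuclideanSpace ℝ (Fin 2))
    (h₃ : AffineIndependent ℝ ![p₁, p₂, p₃])
    (h₄ : AffineIndependent ℝ ![p₁, p₂, p₄])
    (n : EuclideanSpace ℝ (Fin 2)) (hn : ‖n‖ = 1)
    (hn_orth : ⟪n, p₂ - p₁⟫ = 0)
    (hn₄ : 0 < ⟪n, p₄ - p₁⟫) (hn₃ : ⟪n, p₃ - p₁⟫ < 0)
    (T₁ T₂ : Set (EuclideanSpace ℝ (Fin 2)))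
    (hT₁ : T₁ = convexHull ℝ {p₁, p₂, p₃}) (hT₂ : T₂ = convexHull ℝ {p₁, p₂, p₄})
    (hconv : Convex ℝ (T₁ ∪ T₂))
    (q₁ q₂ : EuclideanSpace ℝ (Fin 2)) (c₁ c₂ : ℝ)
    (f₁ f₂ : EuclideanSpace ℝ (Fin 2) → ℝ)
    (hf₁ : ∀ x, f₁ x = ⟪q₁, x⟫ + c₁) (hf₂ : ∀ x, f₂ x = ⟪q₂, x⟫ + c₂)
    (u : EuclideanSpace ℝ (Fin 2) → ℝ)
    (hu₁ : Set.EqOn u f₁ T₁) (hu₂ : Set.EqOn u f₂ T₂)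
    (hedge : Set.EqOn f₁ f₂ (segment ℝ p₁ p₂)) :
    ConvexOn ℝ (T₁ ∪ T₂) u ↔ 0 ≤ ⟪q₂ - q₁, n⟫ := by
  have hne : p₁ ≠ p₂ := fun h => by
    have := h₃.injective (a₁ := 0) (a₂ := 1) (by simpa using h)
    simp at this
  have hdiff : ∀ x, f₂ x = f₁ x + ⟪q₂ - q₁, n⟫ * ⟪n, x - p₁⟫ := by
    intro x
    have e₁ := hedge (left_mem_segment ℝ p₁ p₂)
    have e₂ := hedge (right_mem_segment ℝ p₁ p₂)
    rw [hf₁, hf₂] at *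
    exact affine_sub_eq_jump_mul p₁ p₂ n q₁ q₂ c₁ c₂ hne hn hn_orth e₁ e₂ x
  have hs₁ : ∀ x ∈ T₁, ⟪n, x - p₁⟫ ≤ 0 := by
    intro x hx
    have := inner_sub_nonneg_of_mem_triangle (n := -n) (by simp [hn_orth])
      (by rw [inner_neg_left]; linarith) (hT₁ ▸ hx)
    rw [inner_neg_left] at this
    linarith
  have hs₂ : ∀ x ∈ T₂, 0 ≤ ⟪n, x - p₁⟫ := fun x hx =>
    inner_sub_nonneg_of_mem_triangle hn_orth.ge hn₄.le (hT₂ ▸ hx)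
  constructor
  · intro hu
    have hp₃ : p₃ ∈ T₁ := hT₁ ▸ subset_convexHull ℝ _ (by simp)
    have hp₄ : p₄ ∈ T₂ := hT₂ ▸ subset_convexHull ℝ _ (by simp)
    set s₃ := ⟪n, p₃ - p₁⟫ with hs₃
    set s₄ := ⟪n, p₄ - p₁⟫ with hs₄
    have hpos : 0 < s₄ - s₃ := by linarith
    -- Weights for which `a * s₃ + b * s₄ = 0`: the point `a • p₃ + b • p₄` is on the line `p₁p₂`.
    obtain ⟨a, ha⟩ : ∃ a, a = s₄ / (s₄ - s₃) := ⟨_, rfl⟩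
    obtain ⟨b, hb⟩ : ∃ b, b = -s₃ / (s₄ - s₃) := ⟨_, rfl⟩
    have ha0 : 0 < a := ha ▸ div_pos hn₄ hpos
    have hb0 : 0 < b := hb ▸ div_pos (by linarith) hpos
    have hab : a + b = 1 := by rw [ha, hb]; field_simp; ring
    have habs : a * s₃ + b * s₄ = 0 := by rw [ha, hb]; field_simp; ring
    have hz : ⟪n, a • p₃ + b • p₄ - p₁⟫ = 0 := by
      rw [← habs, hs₃, hs₄]
      simp only [inner_sub_right, inner_add_right, real_inner_smul_right]
      linear_combination ⟪n, p₁⟫ * hab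
    have huz : u (a • p₃ + b • p₄) = f₁ (a • p₃ + b • p₄) := by
      rcases hu.1 (Or.inl hp₃) (Or.inr hp₄) ha0.le hb0.le hab with h | h
      · exact hu₁ h
      · rw [hu₂ h, hdiff, hz, mul_zero, add_zero]
    have key := hu.2 (Or.inl hp₃) (Or.inr hp₄) ha0.le hb0.le hab
    rw [huz, hu₁ hp₃, hu₂ hp₄, hdiff p₄, ← hs₄, hf₁, hf₁, hf₁] at key
    simp only [inner_add_right, real_inner_smul_right, smul_eq_mul] at key
    have hJ : 0 ≤ ⟪q₂ - q₁, n⟫ * (b * s₄) := by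
      have hc : a * c₁ + b * c₁ = c₁ := by rw [← add_mul, hab, one_mul]
      linarith
    exact nonneg_of_mul_nonneg_left hJ (mul_pos hb0 hn₄)
  · intro hJ
    have haff : ∀ (q : EuclideanSpace ℝ (Fin 2)) (c : ℝ),
        ConvexOn ℝ (T₁ ∪ T₂) fun x => ⟪q, x⟫ + c := fun q c =>
      ((innerₗ _ q).convexOn hconv).add_const c
    refine ((haff q₁ c₁).sup (haff q₂ c₂)).congr ?_
    intro x hx
    simp only [Pi.sup_apply, ← hf₁, ← hf₂]
    rcases hx with hx | hx
    · rw [hu₁ hx, hdiff x]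
      exact sup_eq_left.2 (by linarith [mul_nonpos_of_nonneg_of_nonpos hJ (hs₁ x hx)])
    · rw [hu₂ hx, hdiff x]
      exact sup_eq_right.2 (by linarith [mul_nonneg hJ (hs₂ x hx)])
end

section
/- Let p₁, p₂, p₃, p₄ ∈ ℝ² be such that (p₁,p₂,p₃) and (p₁,p₂,p₄) are each affinely independent and p₃, p₄ lie strictly on opposite sides of the line through p₁ and p₂. Set T₁ = conv{p₁,p₂,p₃} and T₂ = conv{p₁,p₂,p₄}, and let n be the unit vector orthogonal to p₂ − p₁ with n·(p₄ − p₁) > 0. Let u : ℝ² → ℝ and let f₁, f₂ be affine maps with constant gradients q₁, q₂ such that u = f₁ on T₁, u = f₂ on T₂, and f₁ = f₂ on the segment [p₁, p₂]. Then for all a, b ∈ ℝ² and every C^∞ function φ with compact support contained in the interior of T₁ ∪ T₂, ∫_{T₁∪T₂} u(x) · D²φ(x)[a,b] dx = (q₂ − q₁)·n · (n·a)(n·b) · ‖p₂ − p₁‖ · ∫₀¹ φ(p₁ + t(p₂ − p₁)) dt. -/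
/-!
Put `J = ⟪q₂ - q₁, n⟫`. The affine map `f₂ - f₁` vanishes on the edge, so its gradient is a multiple
of `n` and `f₂ - f₁ = J ⟪n, x - p₁⟫`. Since `T₁` and `T₂` lie on the two sides of the line through
`p₁` and `p₂`, the function `u` agrees on `T₁ ∪ T₂` with the globally defined Lipschitz function
`g x = f₁ x + J max(0, ⟪n, x - p₁⟫)`, and the integral over `T₁ ∪ T₂` becomes the integral of
`g D²φ[a,b]` over the whole plane.

Integrating by parts once (for Lipschitz functions) moves the derivative along `a` onto `g`; almost
everywhere this derivative is `⟪q₁, a⟫ + J ⟪n, a⟫ 1_H`, where `H` is the open half-plane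
`⟪n, x - p₁⟫ > 0` (`lineDeriv_hinge`). The constant contributes nothing, and the divergence theorem
on `H` (`integral_halfPlane_fderiv`), proved by Fubini in orthonormal coordinates adapted to the
edge, turns the rest into the integral of `φ` over the boundary line. Finally this line meets
`T₁ ∪ T₂` only in the segment `[p₁, p₂]`.
-/

open RealInnerProductSpace MeasureTheory

local notation "E2" => EuclideanSpace ℝ (Fin 2)

/-- Volume-preserving orthonormal coordinates `(s, r) ↦ p + s B₀ + r B₁` on the plane. -/
lemma exists_coord (B : OrthonormalBasis (Fin 2) ℝ E2) (p : E2) :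
    ∃ e : (ℝ × ℝ) ≃ᵐ E2, MeasurePreserving e volume volume ∧
      ∀ z : ℝ × ℝ, e z = p + (z.1 • B 0 + z.2 • B 1) := by
  refine ⟨((MeasurableEquiv.finTwoArrow (α := ℝ)).symm.trans
    ((MeasurableEquiv.toLp 2 (Fin 2 → ℝ)).trans B.measurableEquiv.symm)).trans
    (MeasurableEquiv.addLeft p), ?_, ?_⟩
  · exact ((((volume_preserving_finTwoArrow ℝ).symm).trans
      (((EuclideanSpace.volume_preserving_symm_measurableEquiv_toLp (Fin 2)).symm).trans
        B.measurePreserving_measurableEquiv.symm))).trans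
      (measurePreserving_add_left volume p)
  · intro z
    have : B.measurableEquiv.symm (WithLp.toLp 2 ![z.1, z.2]) = z.1 • B 0 + z.2 • B 1 := by
      change B.repr.symm (WithLp.toLp 2 ![z.1, z.2]) = _
      rw [← B.sum_repr_symm]
      simp [Fin.sum_univ_two]
    exact congrArg (p + ·) this

lemma isClosedEmbedding_line (y w : E2) (hw : ‖w‖ = 1) :
    Topology.IsClosedEmbedding (fun t : ℝ => y + t • w) := by
  refine Isometry.isClosedEmbedding (Isometry.of_dist_eq fun s t => ?_)
  rw [dist_add_left, dist_eq_norm, ← sub_smul, norm_smul, hw, mul_one, Real.dist_eq,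
    Real.norm_eq_abs]

lemma hasDerivAt_line {φ : E2 → ℝ} (hφ : ContDiff ℝ 1 φ) (y w : E2) (t : ℝ) :
    HasDerivAt (fun t : ℝ => φ (y + t • w)) (fderiv ℝ φ (y + t • w) w) t := by
  have h1 : HasDerivAt (fun t : ℝ => y + t • w) w t := by
    simpa using ((hasDerivAt_id t).smul_const w).const_add y
  exact ((hφ.differentiable one_ne_zero) (y + t • w)).hasFDerivAt.comp_hasDerivAt t h1

lemma contDiff_line {φ : E2 → ℝ} (hφ : ContDiff ℝ 1 φ) (y w : E2) :
    ContDiff ℝ 1 (fun t : ℝ => φ (y + t • w)) := by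
  fun_prop

lemma integral_line_fderiv {φ : E2 → ℝ} (hφ : ContDiff ℝ 1 φ) (hs : HasCompactSupport φ)
    (y w : E2) (hw : ‖w‖ = 1) : ∫ t : ℝ, fderiv ℝ φ (y + t • w) w = 0 := by
  have hc := hs.comp_isClosedEmbedding (isClosedEmbedding_line y w hw)
  have hc' := (hs.fderiv_apply ℝ w).comp_isClosedEmbedding (isClosedEmbedding_line y w hw)
  have hcont : Continuous (fun x => fderiv ℝ φ x w) :=
    (hφ.continuous_fderiv one_ne_zero).clm_apply continuous_const
  refine integral_eq_zero_of_hasDerivAt_of_integrable (hasDerivAt_line hφ y w) ?_ ?_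
  · exact Continuous.integrable_of_hasCompactSupport (by fun_prop) hc'
  · exact (contDiff_line hφ y w).continuous.integrable_of_hasCompactSupport hc

lemma integral_halfLine_fderiv {φ : E2 → ℝ} (hφ : ContDiff ℝ 1 φ) (hs : HasCompactSupport φ)
    (y w : E2) (hw : ‖w‖ = 1) : ∫ t in Set.Ioi (0 : ℝ), fderiv ℝ φ (y + t • w) w = - φ y := by
  have hc : HasCompactSupport (fun t : ℝ => φ (y + t • w)) :=
    hs.comp_isClosedEmbedding (isClosedEmbedding_line y w hw)
  have := hc.integral_Ioi_deriv_eq (contDiff_line hφ y w) 0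
  simp only [(hasDerivAt_line hφ y w _).deriv] at this
  simpa using this

/-- Divergence theorem on the half-plane `⟪B₁, x - p⟫ > 0`: only the normal component of `b`
produces a boundary term. -/
lemma integral_halfPlane_fderiv (B : OrthonormalBasis (Fin 2) ℝ E2) (p b : E2) {φ : E2 → ℝ}
    (hφ : ContDiff ℝ 1 φ) (hs : HasCompactSupport φ) :
    ∫ x in {x : E2 | 0 < ⟪B 1, x - p⟫}, fderiv ℝ φ x b
      = - ⟪B 1, b⟫ * ∫ s : ℝ, φ (p + s • B 0) := by
  obtain ⟨e, he, hez⟩ := exists_coord B p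
  have hmeas : MeasurableSet {x : E2 | 0 < ⟪B 1, x - p⟫} :=
    (isOpen_lt continuous_const (by fun_prop)).measurableSet
  have hset : e ⁻¹' {x : E2 | 0 < ⟪B 1, x - p⟫} = {z : ℝ × ℝ | 0 < z.2} := by
    ext z
    simp [hez, inner_add_right, inner_smul_right]
  have hmz : MeasurableSet {z : ℝ × ℝ | 0 < z.2} := hset ▸ e.measurable hmeas
  have hint : ∀ w : E2, Integrable
      ({z : ℝ × ℝ | 0 < z.2}.indicator fun z => fderiv ℝ φ (e z) w) := by
    intro w
    have h1 : Integrable (fun x => fderiv ℝ φ x w) :=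
      Continuous.integrable_of_hasCompactSupport
        ((hφ.continuous_fderiv one_ne_zero).clm_apply continuous_const) (hs.fderiv_apply ℝ w)
    exact ((he.integrable_comp_emb e.measurableEmbedding).2 h1).indicator hmz
  -- tangential part: integrate along the boundary direction first
  have h0 : ∫ z in {z : ℝ × ℝ | 0 < z.2}, fderiv ℝ φ (e z) (B 0) = 0 := by
    rw [← integral_indicator hmz, Measure.volume_eq_prod,
      integral_prod_symm _ (by simpa only [Measure.volume_eq_prod] using hint (B 0))]
    refine integral_eq_zero_of_ae (Filter.Eventually.of_forall fun r => ?_)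
    by_cases hr : 0 < r
    · have := integral_line_fderiv hφ hs (p + r • B 1) (B 0) (B.norm_eq_one 0)
      simp only [Set.indicator, Set.mem_ofPred_eq, hr, if_true, hez, Pi.zero_apply]
      rw [← this]
      congr! 4 with s
      abel
    · simp [Set.indicator, hr]
  -- normal part: the half-line integrals leave the boundary values
  have h1 : ∫ z in {z : ℝ × ℝ | 0 < z.2}, fderiv ℝ φ (e z) (B 1)
      = - ∫ s : ℝ, φ (p + s • B 0) := by
    rw [← integral_indicator hmz, Measure.volume_eq_prod,
      integral_prod _ (by simpa only [Measure.volume_eq_prod] using hint (B 1)), ← integral_neg]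
    refine integral_congr_ae (Filter.Eventually.of_forall fun s => ?_)
    have := integral_halfLine_fderiv hφ hs (p + s • B 0) (B 1) (B.norm_eq_one 1)
    rw [← integral_indicator measurableSet_Ioi] at this
    simp only
    rw [← this]
    congr! 2 with r
    simp only [Set.indicator, Set.mem_ofPred_eq, Set.mem_Ioi, hez, add_assoc]
  have hb : b = ⟪B 0, b⟫ • B 0 + ⟪B 1, b⟫ • B 1 := by
    conv_lhs => rw [← B.sum_repr' b]
    simp [Fin.sum_univ_two]
  rw [← he.setIntegral_preimage_emb e.measurableEmbedding, hset]
  have : ∀ z, fderiv ℝ φ (e z) b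
      = ⟪B 0, b⟫ * fderiv ℝ φ (e z) (B 0) + ⟪B 1, b⟫ * fderiv ℝ φ (e z) (B 1) := by
    intro z
    conv_lhs => rw [hb]
    simp
  simp only [this]
  have hi : ∀ w : E2, IntegrableOn (fun z => fderiv ℝ φ (e z) w) {z : ℝ × ℝ | 0 < z.2} :=
    fun w => (integrable_indicator_iff hmz).1 (hint w)
  rw [integral_add ((hi _).const_mul _) ((hi _).const_mul _), integral_const_mul,
    integral_const_mul, h0, h1]
  ring

/-- Integration by parts along `a` for a Lipschitz function against a smooth test function. -/
lemma integral_mul_fderiv_of_lipschitz {g ψ : E2 → ℝ} {C : NNReal} (hg : LipschitzWith C g)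
    (hψ : ContDiff ℝ 1 ψ) (hs : HasCompactSupport ψ) (a : E2) :
    ∫ x, g x * fderiv ℝ ψ x a = - ∫ x, lineDeriv ℝ g x a * ψ x := by
  obtain ⟨D, hD⟩ := hψ.lipschitzWith_of_hasCompactSupport hs one_ne_zero
  rw [hg.integral_lineDeriv_mul_eq hD hs a, ← integral_neg]
  congr 1 with x
  rw [((hψ.differentiable one_ne_zero) x).lineDeriv_eq_fderiv]
  simp [mul_comm]

/-- The affine function with gradient `q`, bent along the line `⟪n, x - p⟫ = 0` by a gradient
jump `J n`. -/
noncomputable def hinge (q n p : E2) (c J : ℝ) (x : E2) : ℝ :=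
  ⟪q, x⟫ + c + J * max 0 ⟪n, x - p⟫

lemma lipschitz_hinge (q n p : E2) (c J : ℝ) : ∃ C, LipschitzWith C (hinge q n p c J) := by
  refine ⟨‖q‖₊ + ‖J‖₊ * ‖n‖₊, LipschitzWith.of_dist_le_mul fun x y => ?_⟩
  have h1 : |⟪q, x - y⟫| ≤ ‖q‖ * ‖x - y‖ := abs_real_inner_le_norm _ _
  have h2 : |max 0 ⟪n, x - p⟫ - max 0 ⟪n, y - p⟫| ≤ ‖n‖ * ‖x - y‖ := by
    refine (abs_max_sub_max_le_max 0 _ 0 _).trans ?_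
    rw [← inner_sub_right, sub_sub_sub_cancel_right, sub_zero, abs_zero]
    exact max_le (by positivity) (abs_real_inner_le_norm _ _)
  have h3 : hinge q n p c J x - hinge q n p c J y
      = ⟪q, x - y⟫ + J * (max 0 ⟪n, x - p⟫ - max 0 ⟪n, y - p⟫) := by
    simp only [hinge, inner_sub_right]; ring
  rw [Real.dist_eq, dist_eq_norm, h3]
  refine (abs_add_le _ _).trans ?_
  rw [abs_mul]
  have := mul_le_mul_of_nonneg_left h2 (abs_nonneg J)
  push_cast
  rw [Real.norm_eq_abs]
  linarith

lemma lineDeriv_hinge (q n p : E2) (c J : ℝ) (a x : E2) (hx : ⟪n, x - p⟫ ≠ 0) :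
    lineDeriv ℝ (hinge q n p c J) x a
      = ⟪q, a⟫ + {x : E2 | 0 < ⟪n, x - p⟫}.indicator (fun _ => J * ⟪n, a⟫) x := by
  have hcont : Continuous fun y : E2 => ⟪n, y - p⟫ := by fun_prop
  have hd : ∀ w : E2, ∀ d : ℝ, HasLineDerivAt ℝ (fun y : E2 => ⟪w, y⟫ + d) ⟪w, a⟫ x a := by
    intro w d
    exact (((innerSL ℝ w).hasFDerivAt (x := x)).add_const d).hasLineDerivAt a
  rcases lt_or_gt_of_ne hx with h | h
  · have he : hinge q n p c J =ᶠ[nhds x] fun y => ⟪q, y⟫ + c := by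
      filter_upwards [hcont.continuousAt.eventually_lt continuousAt_const h] with y hy
      simp [hinge, max_eq_left hy.le]
    rw [he.lineDeriv_eq, (hd q c).lineDeriv]
    simp [h.not_gt]
  · have he : hinge q n p c J =ᶠ[nhds x] fun y => ⟪q + J • n, y⟫ + (c - J * ⟪n, p⟫) := by
      filter_upwards [continuousAt_const.eventually_lt hcont.continuousAt h] with y hy
      rw [hinge, max_eq_right hy.le]
      simp only [inner_add_left, inner_smul_left, inner_sub_right, conj_trivial]
      ring
    rw [he.lineDeriv_eq, (hd _ _).lineDeriv]
    simp [h, inner_add_left, inner_smul_left]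

lemma ae_off_line (n p : E2) (hn : n ≠ 0) : ∀ᵐ x : E2, ⟪n, x - p⟫ ≠ 0 := by
  have hne : AffineSubspace.mk' p (LinearMap.ker (innerSL ℝ n).toLinearMap) ≠ ⊤ := by
    intro h
    have h1 : p + n ∈ AffineSubspace.mk' p (LinearMap.ker (innerSL ℝ n).toLinearMap) := by
      rw [h]; trivial
    rw [AffineSubspace.mem_mk'] at h1
    simp [hn] at h1
  have := Measure.addHaar_affineSubspace (volume : Measure E2) _ hne
  rw [ae_iff]
  convert this using 2
  ext x
  simp [AffineSubspace.mem_mk']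

/-- Affine coordinates in a triangle with base `p₁ p₂`; the signed height over the base is governed
by the coordinate `γ` of the apex `w`. -/
lemma triangle_coords (p₁ p₂ w n x : E2) (hn : ⟪n, p₂ - p₁⟫ = 0)
    (hx : x ∈ convexHull ℝ {p₁, p₂, w}) :
    ∃ β γ : ℝ, 0 ≤ β ∧ 0 ≤ γ ∧ β + γ ≤ 1 ∧ x = p₁ + (β • (p₂ - p₁) + γ • (w - p₁)) ∧
      ⟪n, x - p₁⟫ = γ * ⟪n, w - p₁⟫ := by
  rw [convexHull_insert (by simp), convexHull_pair, mem_convexJoin] at hx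
  obtain ⟨y, hy, z, ⟨s, t, hs, ht, hst, rfl⟩, ⟨k, l, hk, hl, hkl, rfl⟩⟩ := hx
  rw [Set.mem_singleton_iff] at hy
  subst hy
  have key : k • y + l • (s • p₂ + t • w)
      = y + ((l * s) • (p₂ - y) + (l * t) • (w - y)) := by
    obtain rfl : k = 1 - l := by linarith
    obtain rfl : s = 1 - t := by linarith
    module
  refine ⟨l * s, l * t, by positivity, by positivity, ?_, key, ?_⟩
  · rw [← mul_add, hst]; linarith
  · rw [key, add_sub_cancel_left, inner_add_right, inner_smul_right, inner_smul_right, hn]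
    ring

/-- A triangle with base `p₁ p₂` and apex off the base line meets that line only in the base. -/
lemma triangle_inter_line (p₁ p₂ w n : E2) (hn : ⟪n, p₂ - p₁⟫ = 0) (hw : ⟪n, w - p₁⟫ ≠ 0)
    (hne : p₂ - p₁ ≠ 0) (t : ℝ) (ht : p₁ + t • (p₂ - p₁) ∈ convexHull ℝ {p₁, p₂, w}) :
    t ∈ Set.Icc (0 : ℝ) 1 := by
  obtain ⟨β, γ, hβ, hγ, hs, hx, hh⟩ := triangle_coords p₁ p₂ w n _ hn ht
  rw [add_sub_cancel_left, inner_smul_right, hn, mul_zero, eq_comm, mul_eq_zero] at hh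
  obtain rfl : γ = 0 := hh.resolve_right hw
  rw [zero_smul, add_zero] at hx
  obtain rfl : t = β := smul_left_injective ℝ hne (add_left_cancel hx)
  exact ⟨hβ, by linarith⟩

/-- Gradient-jump representation of the distributional mixed second derivative of a
continuous piecewise affine function on two adjacent triangles: for every smooth test
function `φ` supported in the interior of `T₁ ∪ T₂`,
`∫ u D²φ[a,b] = ((q₂−q₁)·n) (n·a)(n·b) ‖p₂−p₁‖ ∫₀¹ φ(p₁+t(p₂−p₁)) dt`. -/
theorem piecewise_affine_distributional_second_derivative
    (p₁ p₂ p₃ p₄ : EuclideanSpace ℝ (Fin 2))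
    (h₃ : AffineIndependent ℝ ![p₁, p₂, p₃])
    (h₄ : AffineIndependent ℝ ![p₁, p₂, p₄])
    (n : EuclideanSpace ℝ (Fin 2)) (hn : ‖n‖ = 1)
    (hn_orth : ⟪n, p₂ - p₁⟫ = 0)
    (hn₄ : 0 < ⟪n, p₄ - p₁⟫) (hn₃ : ⟪n, p₃ - p₁⟫ < 0)
    (T₁ T₂ : Set (EuclideanSpace ℝ (Fin 2)))
    (hT₁ : T₁ = convexHull ℝ {p₁, p₂, p₃}) (hT₂ : T₂ = convexHull ℝ {p₁, p₂, p₄})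
    (q₁ q₂ : EuclideanSpace ℝ (Fin 2)) (c₁ c₂ : ℝ)
    (f₁ f₂ : EuclideanSpace ℝ (Fin 2) → ℝ)
    (hf₁ : ∀ x, f₁ x = ⟪q₁, x⟫ + c₁) (hf₂ : ∀ x, f₂ x = ⟪q₂, x⟫ + c₂)
    (u : EuclideanSpace ℝ (Fin 2) → ℝ)
    (hu₁ : Set.EqOn u f₁ T₁) (hu₂ : Set.EqOn u f₂ T₂)
    (hedge : Set.EqOn f₁ f₂ (segment ℝ p₁ p₂))
    (a b : EuclideanSpace ℝ (Fin 2)) (φ : EuclideanSpace ℝ (Fin 2) → ℝ)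
    (hφ : ContDiff ℝ (⊤ : ℕ∞) φ) (hφsupp : HasCompactSupport φ)
    (hφint : tsupport φ ⊆ interior (T₁ ∪ T₂)) :
    ∫ x in T₁ ∪ T₂, u x * iteratedFDeriv ℝ 2 φ x ![a, b]
      = ⟪q₂ - q₁, n⟫ * (⟪n, a⟫ * ⟪n, b⟫) * ‖p₂ - p₁‖ *
        ∫ t in (0:ℝ)..1, φ (p₁ + t • (p₂ - p₁)) := by
  have hne : p₂ - p₁ ≠ 0 := by
    rw [sub_ne_zero]
    intro h
    have := h₃.injective (a₁ := 0) (a₂ := 1) (by simp [h])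
    simp at this
  set L := ‖p₂ - p₁‖ with hL
  have hLpos : 0 < L := norm_pos_iff.2 hne
  -- orthonormal basis: unit tangent of the edge, then the normal `n`
  obtain ⟨B, hB0, hB1⟩ : ∃ B : OrthonormalBasis (Fin 2) ℝ (EuclideanSpace ℝ (Fin 2)),
      B 0 = L⁻¹ • (p₂ - p₁) ∧ B 1 = n := by
    have hon : Orthonormal ℝ ![L⁻¹ • (p₂ - p₁), n] := by
      refine ⟨fun i => ?_, fun i j hij => ?_⟩
      · fin_cases i
        · simp [norm_smul, ← hL, abs_of_pos hLpos, hLpos.ne']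
        · simpa using hn
      · fin_cases i <;> fin_cases j <;>
          simp_all [inner_smul_left, inner_smul_right, real_inner_comm]
    refine ⟨OrthonormalBasis.mk hon
      (hon.linearIndependent.span_eq_top_of_card_eq_finrank' (by simp)).ge, ?_, ?_⟩ <;> simp
  set J := ⟪q₂ - q₁, n⟫ with hJ
  have hn0 : n ≠ 0 := by
    rintro rfl
    simp at hn
  have e1 : ⟪q₁, p₁⟫ + c₁ = ⟪q₂, p₁⟫ + c₂ := by
    simpa [hf₁, hf₂] using hedge (left_mem_segment ℝ p₁ p₂)
  have e2 : ⟪q₁, p₂⟫ + c₁ = ⟪q₂, p₂⟫ + c₂ := by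
    simpa [hf₁, hf₂] using hedge (right_mem_segment ℝ p₁ p₂)
  have hq : q₂ - q₁ = J • n := by
    have ht : ⟪B 0, q₂ - q₁⟫ = 0 := by
      rw [hB0, inner_smul_left, real_inner_comm, inner_sub_left, inner_sub_right, inner_sub_right]
      simp only [mul_eq_zero]
      right
      linarith
    conv_lhs => rw [← B.sum_repr' (q₂ - q₁)]
    rw [Fin.sum_univ_two, ht, hB1, hJ, real_inner_comm]
    simp
  have hf21 : ∀ x, f₂ x = f₁ x + J * ⟪n, x - p₁⟫ := by
    intro x
    have h : ⟪q₂ - q₁, x - p₁⟫ = J * ⟪n, x - p₁⟫ := by rw [hq, inner_smul_left]; simp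
    rw [← h, hf₁, hf₂]
    simp only [inner_sub_left, inner_sub_right]
    linarith
  have hu : ∀ x ∈ T₁ ∪ T₂, u x = hinge q₁ n p₁ c₁ J x := by
    rintro x (hx | hx)
    · obtain ⟨β, γ, hβ, hγ, -, -, hh⟩ := triangle_coords p₁ p₂ p₃ n x hn_orth (hT₁ ▸ hx)
      have : ⟪n, x - p₁⟫ ≤ 0 := hh ▸ mul_nonpos_of_nonneg_of_nonpos hγ hn₃.le
      rw [hu₁ hx, hf₁, hinge, max_eq_left this]
      ring
    · obtain ⟨β, γ, hβ, hγ, -, -, hh⟩ := triangle_coords p₁ p₂ p₄ n x hn_orth (hT₂ ▸ hx)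
      have : 0 ≤ ⟪n, x - p₁⟫ := hh ▸ mul_nonneg hγ hn₄.le
      rw [hu₂ hx, hf21, hf₁, hinge, max_eq_right this]
  have hsub : tsupport φ ⊆ T₁ ∪ T₂ := hφint.trans interior_subset
  have hmeasT : MeasurableSet (T₁ ∪ T₂) := by
    have hc : ∀ w : EuclideanSpace ℝ (Fin 2), MeasurableSet (convexHull ℝ {p₁, p₂, w}) := fun w =>
      ((Set.toFinite {p₁, p₂, w}).isCompact_convexHull (𝕜 := ℝ)).isClosed.measurableSet
    rw [hT₁, hT₂]
    exact (hc _).union (hc _)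
  have hφ1 : ContDiff ℝ 1 φ := hφ.of_le (by exact_mod_cast le_top)
  have hφ2 : ContDiff ℝ 2 φ := contDiff_infty.1 hφ 2
  have hψ : ContDiff ℝ 1 (fun x => fderiv ℝ φ x b) :=
    (hφ2.fderiv_right (m := 1) one_add_one_eq_two.le).clm_apply contDiff_const
  have hψs : HasCompactSupport (fun x => fderiv ℝ φ x b) := hφsupp.fderiv_apply ℝ b
  have hD2 : ∀ x, iteratedFDeriv ℝ 2 φ x ![a, b] = fderiv ℝ (fun y => fderiv ℝ φ y b) x a := by
    intro x
    have hd : DifferentiableAt ℝ (fderiv ℝ φ) x :=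
      (hφ2.fderiv_right (m := 1) one_add_one_eq_two.le).differentiable one_ne_zero x
    rw [iteratedFDeriv_two_apply, fderiv_clm_apply hd (differentiableAt_const b)]
    simp
  have hzero : ∀ x ∉ T₁ ∪ T₂, iteratedFDeriv ℝ 2 φ x ![a, b] = 0 := by
    intro x hx
    have : iteratedFDeriv ℝ 2 φ x = 0 :=
      image_eq_zero_of_notMem_tsupport fun h => hx (hsub (tsupport_iteratedFDeriv_subset 2 h))
    simp [this]
  have step1 : ∫ x in T₁ ∪ T₂, u x * iteratedFDeriv ℝ 2 φ x ![a, b]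
      = ∫ x, hinge q₁ n p₁ c₁ J x * fderiv ℝ (fun y => fderiv ℝ φ y b) x a := by
    rw [setIntegral_congr_fun hmeasT (g := fun x => hinge q₁ n p₁ c₁ J x *
      iteratedFDeriv ℝ 2 φ x ![a, b]) fun x hx => by simp only [hu x hx]]
    rw [setIntegral_eq_integral_of_forall_compl_eq_zero fun x hx => by rw [hzero x hx, mul_zero]]
    simp only [hD2]
  obtain ⟨C, hC⟩ := lipschitz_hinge q₁ n p₁ c₁ J
  have hmH : MeasurableSet {x : EuclideanSpace ℝ (Fin 2) | 0 < ⟪n, x - p₁⟫} :=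
    (isOpen_lt continuous_const (by fun_prop)).measurableSet
  have hψi : Integrable (fun x => fderiv ℝ φ x b) :=
    hψ.continuous.integrable_of_hasCompactSupport hψs
  have hψ0 : ∫ x, fderiv ℝ φ x b = 0 := by
    have := integral_mul_fderiv_of_lipschitz (LipschitzWith.const (1 : ℝ)) hφ1 hφsupp b
    simpa [lineDeriv] using this
  have step2 : ∫ x, lineDeriv ℝ (hinge q₁ n p₁ c₁ J) x a * fderiv ℝ φ x b
      = J * ⟪n, a⟫ * ∫ x in {x : EuclideanSpace ℝ (Fin 2) | 0 < ⟪n, x - p₁⟫}, fderiv ℝ φ x b := by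
    have hae : (fun x => lineDeriv ℝ (hinge q₁ n p₁ c₁ J) x a * fderiv ℝ φ x b)
        =ᵐ[volume] fun x => ⟪q₁, a⟫ * fderiv ℝ φ x b + J * ⟪n, a⟫ *
          {x : EuclideanSpace ℝ (Fin 2) | 0 < ⟪n, x - p₁⟫}.indicator
            (fun x => fderiv ℝ φ x b) x := by
      filter_upwards [ae_off_line n p₁ hn0] with x hx
      rw [lineDeriv_hinge _ _ _ _ _ _ _ hx]
      by_cases h : 0 < ⟪n, x - p₁⟫
      · simp [Set.indicator, h]; ring
      · simp [Set.indicator, h]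
    rw [integral_congr_ae hae, integral_add (hψi.const_mul _) ((hψi.indicator hmH).const_mul _),
      integral_const_mul, integral_const_mul, hψ0, integral_indicator hmH]
    ring
  have step3 := integral_halfPlane_fderiv B p₁ b hφ1 hφsupp
  rw [hB1, hB0] at step3
  have hline : ∫ s : ℝ, φ (p₁ + s • L⁻¹ • (p₂ - p₁))
      = L * ∫ t in (0:ℝ)..1, φ (p₁ + t • (p₂ - p₁)) := by
    have hout : ∀ t : ℝ, t ∉ Set.Icc (0 : ℝ) 1 → φ (p₁ + t • (p₂ - p₁)) = 0 := by
      intro t ht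
      refine image_eq_zero_of_notMem_tsupport fun h => ht ?_
      rcases hsub h with h | h
      · exact triangle_inter_line p₁ p₂ p₃ n hn_orth hn₃.ne hne t (hT₁ ▸ h)
      · exact triangle_inter_line p₁ p₂ p₄ n hn_orth hn₄.ne' hne t (hT₂ ▸ h)
    rw [intervalIntegral.integral_of_le zero_le_one, ← integral_Icc_eq_integral_Ioc,
      setIntegral_eq_integral_of_forall_compl_eq_zero hout]
    have := Measure.integral_comp_mul_left (fun t : ℝ => φ (p₁ + t • (p₂ - p₁))) L⁻¹
    rw [inv_inv, abs_of_pos hLpos, smul_eq_mul] at this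
    rw [← this]
    congr 1 with s
    rw [smul_smul, mul_comm]
  rw [step1, integral_mul_fderiv_of_lipschitz hC hψ hψs a, step2, step3, hline]
  ring
end

section
/- Let u : ℝ² → ℝ be continuous, let Ω′ ⊆ ℝ² be open, and let a, b ∈ ℝ². Suppose that ∫_{ℝ²} u(x) D²ψ(x)[a,b] dx ≥ 0 for every nonnegative C^∞ function ψ with compact support contained in Ω′. Then for all α, β > 0 and every nonnegative C^∞ function φ whose support satisfies supp φ + {t α a + s β b : t, s ∈ [0,1]} ⊆ Ω′, one has ∫_{ℝ²} (u(x+αa+βb) − u(x+αa) − u(x+βb) + u(x)) φ(x) dx ≥ 0. -/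
open MeasureTheory

/-!
Put `H(w) = ∫ u(x) φ(x - w) dx`, the pairing of `u` with the translate of `φ` by `w`.
By translation invariance, the integral of the statement is the second difference
`H(αa + βb) - H(αa) - H(βb) + H(0)`. Derivatives of `H` fall on `φ` (`hasDerivAt_pairing`), so the
mixed derivative of `(p, q) ↦ H(pa + qb)` is `∫ u(x) D²φ(x - pa - qb)[a, b] dx`. For
`0 ≤ p ≤ α`, `0 ≤ q ≤ β` the translated function `φ(· - pa - qb)` is an admissible test function
in the hypothesis, so this mixed derivative is nonnegative on the rectangle, and
two applications of monotonicity give the sign of the second difference.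
-/

/-- Differentiation of `w ↦ ∫ u(x) g(x - w) dx` along a line: up to the reflection
`y ↦ -y` this function is the convolution of `u` with `g`, and the derivative falls on `g`. -/
lemma hasDerivAt_pairing (u : (Fin 2 → ℝ) → ℝ) (hu : Continuous u)
    (g : (Fin 2 → ℝ) → ℝ) (hg : ContDiff ℝ 1 g) (hgc : HasCompactSupport g)
    (c v : Fin 2 → ℝ) (p : ℝ) :
    HasDerivAt (fun p : ℝ => ∫ x, u x * g (x - (c + p • v)))
      (-∫ x, u x * fderiv ℝ g (x - (c + p • v)) v) p := by
  have hr : ContDiff ℝ 1 (fun y => g (-y)) := hg.comp contDiff_neg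
  have hrc : HasCompactSupport (fun y => g (-y)) :=
    hgc.comp_homeomorph (Homeomorph.neg (Fin 2 → ℝ))
  have hH := hrc.hasFDerivAt_convolution_right (ContinuousLinearMap.mul ℝ ℝ) (μ := volume)
    hu.locallyIntegrable hr (c + p • v)
  have hline : HasDerivAt (fun p : ℝ => c + p • v) v p := by
    simpa using ((hasDerivAt_id p).smul_const v).const_add c
  have h := hH.comp_hasDerivAt p hline
  rw [convolution_precompR_apply (ContinuousLinearMap.mul ℝ ℝ) hu.locallyIntegrable
    (hrc.fderiv ℝ) (hr.continuous_fderiv one_ne_zero)] at h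
  have hfun : (fun p : ℝ => ∫ x, u x * g (x - (c + p • v)))
      = convolution u (fun y => g (-y)) (ContinuousLinearMap.mul ℝ ℝ) volume ∘
        fun p : ℝ => c + p • v := by
    funext q
    simp [convolution]
  have hval : -∫ x, u x * fderiv ℝ g (x - (c + p • v)) v
      = convolution u (fun y => fderiv ℝ (fun y => g (-y)) y v)
        (ContinuousLinearMap.mul ℝ ℝ) volume (c + p • v) := by
    rw [← integral_neg]
    simp only [convolution, ContinuousLinearMap.mul_apply']
    congr 1
    funext x
    have hneg : fderiv ℝ (fun y => g (-y)) (c + p • v - x)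
        = -fderiv ℝ g (-(c + p • v - x)) := by
      have hd := (hg.differentiable one_ne_zero (-(c + p • v - x))).hasFDerivAt
      have := (hd.comp (c + p • v - x) (hasFDerivAt_id (𝕜 := ℝ) (c + p • v - x)).neg).fderiv
      rw [show (fun y => g (-y)) = g ∘ Neg.neg from rfl, this]
      ext w
      simp
    rw [hneg]
    simp
  rw [hfun, hval]
  exact h

/-- A function with nonnegative mixed derivative on a rectangle has nonnegative second
difference over it; `F₂` is the partial derivative in the second variable and `F₁₂` the derivative
of `F₂` in the first one. -/
lemma secondDiff_nonneg (F F₂ F₁₂ : ℝ → ℝ → ℝ) (α β : ℝ) (hα : 0 < α) (hβ : 0 < β)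
    (h2 : ∀ p q, HasDerivAt (fun q => F p q) (F₂ p q) q)
    (h12 : ∀ p q, HasDerivAt (fun p => F₂ p q) (F₁₂ p q) p)
    (hpos : ∀ p ∈ Set.Icc 0 α, ∀ q ∈ Set.Icc 0 β, 0 ≤ F₁₂ p q) :
    0 ≤ F α β - F α 0 - F 0 β + F 0 0 := by
  have key : ∀ q ∈ Set.Icc 0 β, F₂ 0 q ≤ F₂ α q := by
    intro q hq
    have : MonotoneOn (fun p => F₂ p q) (Set.Icc 0 α) := by
      refine monotoneOn_of_hasDerivWithinAt_nonneg (convex_Icc 0 α)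
        (fun p _ => (h12 p q).continuousAt.continuousWithinAt)
        (fun p _ => (h12 p q).hasDerivWithinAt) (fun p hp => ?_)
      exact hpos p (interior_subset hp) q hq
    exact this (Set.left_mem_Icc.2 hα.le) (Set.right_mem_Icc.2 hα.le) hα.le
  have hd : ∀ q, HasDerivAt (fun q => F α q - F 0 q) (F₂ α q - F₂ 0 q) q :=
    fun q => (h2 α q).sub (h2 0 q)
  have : MonotoneOn (fun q => F α q - F 0 q) (Set.Icc 0 β) := by
    refine monotoneOn_of_hasDerivWithinAt_nonneg (convex_Icc 0 β)
      (fun q _ => (hd q).continuousAt.continuousWithinAt)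
      (fun q _ => (hd q).hasDerivWithinAt) (fun q hq => ?_)
    exact sub_nonneg.2 (key q (interior_subset hq))
  have := this (Set.left_mem_Icc.2 hβ.le) (Set.right_mem_Icc.2 hβ.le) hβ.le
  simp only at this
  linarith

/-- If the distributional mixed derivative `∂²u/(∂a∂b)` of a continuous function `u` is
nonnegative on the open set `Ω'`, then the weak second differences of `u` against suitable
nonnegative test functions are nonnegative. -/
theorem secondDifference_nonneg_of_distributional_nonneg
    (u : (Fin 2 → ℝ) → ℝ) (hu : Continuous u)
    (Ω' : Set (Fin 2 → ℝ)) (hΩ' : IsOpen Ω') (a b : Fin 2 → ℝ)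
    (hdist : ∀ ψ : (Fin 2 → ℝ) → ℝ, ContDiff ℝ (⊤ : ℕ∞) ψ → HasCompactSupport ψ →
      tsupport ψ ⊆ Ω' → (∀ x, 0 ≤ ψ x) →
      0 ≤ ∫ x, u x * iteratedFDeriv ℝ 2 ψ x ![a, b]) :
    ∀ α β : ℝ, 0 < α → 0 < β →
      ∀ φ : (Fin 2 → ℝ) → ℝ, ContDiff ℝ (⊤ : ℕ∞) φ → HasCompactSupport φ →
        (∀ x, 0 ≤ φ x) →
        (∀ x ∈ tsupport φ, ∀ t ∈ Set.Icc (0:ℝ) 1, ∀ s ∈ Set.Icc (0:ℝ) 1,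
          x + (t * α) • a + (s * β) • b ∈ Ω') →
        0 ≤ ∫ x, (u (x + α • a + β • b) - u (x + α • a) - u (x + β • b) + u x) * φ x := by
  intro α β hα hβ φ hφ hφc hφ0 hsupp
  have hφ' : ContDiff ℝ 1 (fderiv ℝ φ) := hφ.fderiv_right (by norm_cast)
  have hφb : ContDiff ℝ 1 (fun x => fderiv ℝ φ x b) := hφ'.clm_apply contDiff_const
  have hφbc : HasCompactSupport (fun x => fderiv ℝ φ x b) := hφc.fderiv_apply ℝ b
  have hmixed : ∀ x, fderiv ℝ (fun x => fderiv ℝ φ x b) x a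
      = iteratedFDeriv ℝ 2 φ x ![a, b] := by
    intro x
    rw [iteratedFDeriv_two_apply,
      fderiv_clm_apply (hφ'.differentiable one_ne_zero x) (differentiableAt_const b)]
    simp
  have hS := secondDiff_nonneg
    (fun p q => ∫ x, u x * φ (x - (p • a + q • b)))
    (fun p q => -∫ x, u x * fderiv ℝ φ (x - (p • a + q • b)) b)
    (fun p q => ∫ x, u x * iteratedFDeriv ℝ 2 φ (x - (p • a + q • b)) ![a, b]) α β hα hβ
    (fun p q => hasDerivAt_pairing u hu φ (hφ.of_le (by norm_cast)) hφc _ _ _)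
    (fun p q => by
      have h := (hasDerivAt_pairing u hu _ hφb hφbc (q • b) a p).neg
      simp only [hmixed, neg_neg, add_comm (q • b)] at h
      exact h)
    (fun p hp q hq => by
      have hc : tsupport (fun x => φ (x - (p • a + q • b)))
          = (fun x => x - (p • a + q • b)) ⁻¹' tsupport φ :=
        tsupport_comp_eq_preimage φ (Homeomorph.subRight (p • a + q • b))
      have h := hdist (fun x => φ (x - (p • a + q • b)))
        (hφ.comp (contDiff_id.sub contDiff_const))
        (hφc.comp_homeomorph (Homeomorph.subRight (p • a + q • b))) ?_ (fun x => hφ0 _)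
      · simpa only [iteratedFDeriv_comp_sub] using h
      · rw [hc]
        intro x hx
        have := hsupp _ hx (p / α) ⟨div_nonneg hp.1 hα.le, (div_le_one hα).2 hp.2⟩
          (q / β) ⟨div_nonneg hq.1 hβ.le, (div_le_one hβ).2 hq.2⟩
        rw [div_mul_cancel₀ _ hα.ne', div_mul_cancel₀ _ hβ.ne', add_assoc] at this
        simpa using this)
  have htrans : ∀ w : Fin 2 → ℝ, ∫ x, u x * φ (x - w) = ∫ x, u (x + w) * φ x := by
    intro w
    rw [← integral_add_right_eq_self (fun x => u x * φ (x - w)) w]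
    simp
  have hint : ∀ w : Fin 2 → ℝ, Integrable (fun x => u (x + w) * φ x) := fun w =>
    ((hu.comp (continuous_add_const w)).mul hφ.continuous).integrable_of_hasCompactSupport
      hφc.mul_left
  simp only [htrans] at hS
  have hsplit : ∀ w₁ w₂ w₃ w₄ : Fin 2 → ℝ,
      ∫ x, (u (x + w₁) - u (x + w₂) - u (x + w₃) + u (x + w₄)) * φ x
        = (∫ x, u (x + w₁) * φ x) - (∫ x, u (x + w₂) * φ x) - (∫ x, u (x + w₃) * φ x)
          + ∫ x, u (x + w₄) * φ x := by
    intro w₁ w₂ w₃ w₄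
    simp only [add_mul, sub_mul]
    rw [integral_add (by exact ((hint w₁).sub (hint w₂)).sub (hint w₃)) (hint w₄),
      integral_sub (by exact (hint w₁).sub (hint w₂)) (hint w₃),
      integral_sub (hint w₁) (hint w₂)]
  rw [← hsplit] at hS
  simpa only [zero_smul, add_zero, zero_add, ← add_assoc] using hS
end

section
/- Let Ω′ ⊆ ℝ² be a convex open set, let T₁, …, T_m ⊂ ℝ² be finitely many triangles (each the convex hull of an affinely independent triple) with pairwise disjoint interiors whose union contains Ω′, and let u : ℝ² → ℝ be convex on Ω′ and coincide on each T_k ∩ Ω′ with an affine map f_k. Suppose a and b are two linearly independent unit vectors such that for all k ≠ l and every unit vector n ∈ ℝ², if T_k ∩ T_l contains two distinct points and n is orthogonal to x − y for all x, y ∈ T_k ∩ T_l, then (n·a)(n·b) ≥ 0. Then ∫_{ℝ²} u(x) D²ψ(x)[a,b] dx ≥ 0 for every nonnegative C^∞ function ψ with compact support contained in Ω′; that is, the distributional derivative ∂²u/(∂a∂b) is nonnegative on Ω′. -/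
open MeasureTheory Matrix

/-!
The proof shows that all mixed differences
`u (w + s a + t b) - u (w + s a) - u (w + t b) + u w` over parallelograms in `Ω'` (`s, t ≥ 0`) are
nonnegative (`mixed_difference_nonneg`), and then passes to the limit in the difference quotients
of the test function (`integral_mixed_deriv_nonneg`).

For the mixed differences, write `f_k x = q k ⬝ x + c k`. By convexity `f_k ≤ u` on `Ω'` as soon as
`T k` meets `Ω'` (`affine_le`). Consider a line in direction `b` which avoids the vertices and the
one-point intersections `T k ∩ T l`. When it passes from `T k` to `T l` at `z`, a line through `z`
with normal `n` separates the two triangles. It is not parallel to `b`, since it contains a vertex of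
`T k`; hence `n ⬝ b > 0`. The two affine pieces agree along the common edge, so `q l - q k = μ n`,
and `f_k ≤ u` gives `μ (n ⬝ b) ≥ 0`, so `μ ≥ 0`. The hypothesis `(n ⬝ a) (n ⬝ b) ≥ 0` now gives
`(q l - q k) ⬝ a ≥ 0` (`slope_le_of_cross`). Thus the slope of `u` in direction `a` is nondecreasing
along such lines. Since `a` and `b` are independent, only finitely many of the lines
`w + r a + ℝ b` are excluded, and the continuity of `u` takes care of these
(`le_of_eventually_right_le_off_finite`).
-/

/-! ### A one-dimensional monotonicity criterion -/

theorem le_of_eventually_right_le_off_finite {h : ℝ → ℝ} (B : Finset ℝ) :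
    ∀ {c d : ℝ}, c ≤ d → ContinuousOn h (Set.Icc c d) →
      (∀ r ∈ Set.Ico c d, r ∉ B → ∃ ε > 0, ∀ τ ∈ Set.Icc 0 ε, h r ≤ h (r + τ)) →
      h c ≤ h d := by
  induction B using Finset.induction_on with
  | empty =>
    intro c d hcd hcont hloc
    have hclosed : IsClosed ({r | h c ≤ h r} ∩ Set.Icc c d) := by
      rw [Set.inter_comm]
      exact hcont.preimage_isClosed_of_isClosed isClosed_Icc isClosed_Ici
    refine hclosed.mem_of_ge_of_forall_exists_gt (a := c) (b := d) (le_refl (h c)) hcd ?_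
    rintro r ⟨hr, hrI⟩
    obtain ⟨ε, hε, hl⟩ := hloc r hrI (by simp)
    have h1 : 0 < min ε (d - r) := lt_min hε (sub_pos.2 hrI.2)
    refine ⟨r + min ε (d - r), ?_, by linarith, by linarith [min_le_right ε (d - r)]⟩
    exact le_trans hr (hl _ ⟨h1.le, min_le_left _ _⟩)
  | insert p B hp ih =>
    intro c d hcd hcont hloc
    by_cases hpI : p ∈ Set.Ico c d
    · have h1 : h c ≤ h p := by
        refine ih hpI.1 (hcont.mono (Set.Icc_subset_Icc_right hpI.2.le)) fun r hr hrB => ?_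
        refine hloc r ⟨hr.1, hr.2.trans hpI.2⟩ ?_
        simp [hrB, hr.2.ne]
      have h2 : ∀ p' ∈ Set.Ioo p d, h p' ≤ h d := fun p' hp' => by
        refine ih hp'.2.le (hcont.mono (Set.Icc_subset_Icc_left (hpI.1.trans hp'.1.le)))
          fun r hr hrB => ?_
        refine hloc r ⟨hpI.1.trans (hp'.1.le.trans hr.1), hr.2⟩ ?_
        simp [hrB, (hp'.1.trans_le hr.1).ne']
      have h3 : Filter.Tendsto h (nhdsWithin p (Set.Ioo p d)) (nhds (h p)) :=
        (hcont p ⟨hpI.1, hpI.2.le⟩).mono fun x hx => ⟨hpI.1.trans hx.1.le, hx.2.le⟩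
      have : (nhdsWithin p (Set.Ioo p d)).NeBot := left_nhdsWithin_Ioo_neBot hpI.2
      exact h1.trans (le_of_tendsto h3 (Filter.eventually_of_mem self_mem_nhdsWithin h2))
    · refine ih hcd hcont fun r hr hrB => hloc r hr ?_
      have : r ≠ p := fun h => hpI (h ▸ hr)
      simp [hrB, this]

/-! ### Geometry of the pieces -/

/-- Finitely many closed convex sets covering an open set: from any point of the open set, one can
move a little in any direction while staying in a single one of them. -/
theorem exists_active {m : ℕ} {Ω' : Set (Fin 2 → ℝ)} (hΩ'o : IsOpen Ω')
    {T : Fin m → Set (Fin 2 → ℝ)} (hTc : ∀ k, Convex ℝ (T k)) (hTcl : ∀ k, IsClosed (T k))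
    (hcover : Ω' ⊆ ⋃ k, T k) {z : Fin 2 → ℝ} (hz : z ∈ Ω') (v : Fin 2 → ℝ) :
    ∃ k, z ∈ T k ∧ ∃ ε > 0, ∀ τ ∈ Set.Icc (0 : ℝ) ε, z + τ • v ∈ T k := by
  have hlim : Filter.Tendsto (fun τ : ℝ => z + τ • v) (nhdsWithin 0 (Set.Ioi 0)) (nhds z) := by
    have : Continuous (fun τ : ℝ => z + τ • v) := by fun_prop
    have h := this.tendsto 0
    simp only [zero_smul, add_zero] at h
    exact h.mono_left nhdsWithin_le_nhds
  have hfreq : ∃ k, ∃ᶠ τ in nhdsWithin (0 : ℝ) (Set.Ioi 0), z + τ • v ∈ T k := by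
    by_contra! hcon
    have h1 := Filter.eventually_all.2 hcon
    have h2 := hlim.eventually (hΩ'o.mem_nhds hz)
    obtain ⟨τ, h1, h2⟩ := (h1.and h2).exists
    obtain ⟨k, hk⟩ := Set.mem_iUnion.1 (hcover h2)
    exact h1 k hk
  obtain ⟨k, hk⟩ := hfreq
  have hzk : z ∈ T k := by
    by_contra hzk
    exact hk (hlim.eventually ((hTcl k).isOpen_compl.mem_nhds hzk))
  obtain ⟨ε, hεk, hε⟩ := (hk.and_eventually self_mem_nhdsWithin).exists
  refine ⟨k, hzk, ε, hε, fun τ hτ => ?_⟩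
  have hε' : (0 : ℝ) < ε := hε
  have := (hTc k).add_smul_sub_mem hzk hεk (t := τ / ε)
    ⟨div_nonneg hτ.1 hε'.le, (div_le_one hε').2 hτ.2⟩
  rwa [add_sub_cancel_left, smul_smul, div_mul_cancel₀ _ hε'.ne'] at this

/-- The affine piece of a set `T` with interior that meets `Ω'` is a global minorant of `u`. -/
theorem affine_le {Ω' : Set (Fin 2 → ℝ)} (hΩ'o : IsOpen Ω')
    {T : Set (Fin 2 → ℝ)} (hTc : Convex ℝ T) (hTi : (interior T).Nonempty)
    {u : (Fin 2 → ℝ) → ℝ} (hu : ConvexOn ℝ Ω' u) {q : Fin 2 → ℝ} {c : ℝ}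
    (huaff : ∀ x ∈ T ∩ Ω', u x = q ⬝ᵥ x + c) {z : Fin 2 → ℝ} (hzT : z ∈ T) (hz : z ∈ Ω')
    {y : Fin 2 → ℝ} (hy : y ∈ Ω') : q ⬝ᵥ y + c ≤ u y := by
  have hzc : z ∈ closure (interior T) := by
    rw [hTc.closure_interior_eq_closure_of_nonempty_interior hTi]
    exact subset_closure hzT
  obtain ⟨p, hpΩ, hpT⟩ := mem_closure_iff.1 hzc Ω' hΩ'o hz
  have hlim : Filter.Tendsto (fun τ : ℝ => (1 - τ) • p + τ • y) (nhdsWithin 0 (Set.Ioi 0))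
      (nhds p) := by
    have : Continuous (fun τ : ℝ => (1 - τ) • p + τ • y) := by fun_prop
    have h := this.tendsto 0
    simp only [zero_smul, add_zero, sub_zero, one_smul] at h
    exact h.mono_left nhdsWithin_le_nhds
  have h1 := hlim.eventually (isOpen_interior.mem_nhds hpT)
  have h2 : ∀ᶠ τ : ℝ in nhdsWithin 0 (Set.Ioi 0), τ ∈ Set.Ioo (0 : ℝ) 1 :=
    Ioo_mem_nhdsGT one_pos
  obtain ⟨τ, h1, h2⟩ := (h1.and h2).exists
  have h3 := hu.2 hpΩ hy (sub_nonneg.2 h2.2.le) h2.1.le (by ring)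
  have h4 := hu.1 hpΩ hy (sub_nonneg.2 h2.2.le) h2.1.le (by ring)
  rw [huaff _ ⟨interior_subset h1, h4⟩, huaff p ⟨interior_subset hpT, hpΩ⟩] at h3
  simp only [dotProduct_add, dotProduct_smul, smul_eq_mul] at h3
  have : τ * (q ⬝ᵥ y + c) ≤ τ * u y := by linarith
  exact le_of_mul_le_mul_left this h2.1

/-- Two convex bodies with disjoint interiors and a common point `z` are separated by a line
through `z`. -/
theorem exists_separating {S T : Set (Fin 2 → ℝ)} (hS : Convex ℝ S) (hT : Convex ℝ T)
    (hSi : (interior S).Nonempty) (hTi : (interior T).Nonempty)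
    (hdisj : interior S ∩ interior T = ∅) {z : Fin 2 → ℝ} (hzS : z ∈ S) (hzT : z ∈ T) :
    ∃ n : Fin 2 → ℝ, n ≠ 0 ∧ (∀ x ∈ S, n ⬝ᵥ x ≤ n ⬝ᵥ z) ∧ (∀ x ∈ T, n ⬝ᵥ z ≤ n ⬝ᵥ x) := by
  have hcl : ∀ {S : Set (Fin 2 → ℝ)}, Convex ℝ S → (interior S).Nonempty →
      S ⊆ closure (interior S) := fun h hi => by
    rw [h.closure_interior_eq_closure_of_nonempty_interior hi]
    exact subset_closure
  have hd : Disjoint (interior S) T := by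
    have := (Set.disjoint_iff_inter_eq_empty.2 hdisj).closure_right isOpen_interior
    exact this.mono_right (hcl hT hTi)
  obtain ⟨f, γ, hf1, hf2⟩ := geometric_hahn_banach_open hS.interior isOpen_interior hT hd
  have hdot : ∀ x, f x = (fun i => f (Pi.single i 1)) ⬝ᵥ x := fun x => by
    conv_lhs => rw [pi_eq_sum_univ' x]
    simp [dotProduct, mul_comm]
  have hf1' : ∀ x ∈ S, f x ≤ γ := fun x hx =>
    closure_minimal (fun y hy => (hf1 y hy).le) (isClosed_le f.continuous continuous_const)
      (hcl hS hSi hx)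
  have hzγ : f z = γ := le_antisymm (hf1' z hzS) (hf2 z hzT)
  refine ⟨fun i => f (Pi.single i 1), ?_, ?_, ?_⟩
  · intro h0
    obtain ⟨p, hp⟩ := hSi
    have h1 := hf1 p hp
    rw [← hzγ, hdot, hdot z, h0] at h1
    simp at h1
  · intro x hx
    rw [← hdot, ← hdot, hzγ]; exact hf1' x hx
  · intro x hx
    rw [← hdot, ← hdot, hzγ]; exact hf2 x hx

/-- The maximum of a linear form on a triangle is attained at a vertex. -/
theorem exists_vertex_eq {P : Fin 3 → (Fin 2 → ℝ)} {n z : Fin 2 → ℝ}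
    (hz : z ∈ convexHull ℝ (Set.range P))
    (hmax : ∀ x ∈ convexHull ℝ (Set.range P), n ⬝ᵥ x ≤ n ⬝ᵥ z) :
    ∃ i, n ⬝ᵥ P i = n ⬝ᵥ z := by
  by_contra! hcon
  have hlt : ∀ i, n ⬝ᵥ P i < n ⬝ᵥ z := fun i =>
    lt_of_le_of_ne (hmax _ (subset_convexHull ℝ _ ⟨i, rfl⟩)) (hcon i)
  have hconv : Convex ℝ {x : Fin 2 → ℝ | n ⬝ᵥ x < n ⬝ᵥ z} :=
    convex_halfSpace_lt ⟨fun x y => dotProduct_add _ _ _, fun c x => dotProduct_smul _ _ _⟩ _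
  have := convexHull_min (Set.range_subset_iff.2 hlt) hconv hz
  exact lt_irrefl (n ⬝ᵥ z) this

/-- In the plane, two vectors `d`, `n` orthogonal to `e ≠ 0` are parallel; this is the resulting
identity between their inner products with `a` and `b`. -/
theorem dot_mul_dot_comm {d n e : Fin 2 → ℝ} (he : e ≠ 0) (hd : d ⬝ᵥ e = 0) (hn : n ⬝ᵥ e = 0)
    (a b : Fin 2 → ℝ) : (d ⬝ᵥ a) * (n ⬝ᵥ b) = (n ⬝ᵥ a) * (d ⬝ᵥ b) := by
  simp only [dotProduct, Fin.sum_univ_two] at *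
  have hdet : d 0 * n 1 - d 1 * n 0 = 0 := by
    by_contra hne
    apply he
    have h0 : (d 0 * n 1 - d 1 * n 0) * e 0 = 0 := by linear_combination n 1 * hd - d 1 * hn
    have h1 : (d 0 * n 1 - d 1 * n 0) * e 1 = 0 := by linear_combination d 0 * hn - n 0 * hd
    funext i
    fin_cases i
    · simpa [hne] using h0
    · simpa [hne] using h1
  linear_combination (a 0 * b 1 - a 1 * b 0) * hdet

/-- Normalization: the sign of `(n ⬝ a) (n ⬝ b)` may be tested on the unit vector along `n`. -/
theorem nonneg_of_unit {n a b : Fin 2 → ℝ} (hn : n ≠ 0) {p : (Fin 2 → ℝ) → Prop}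
    (hp : p ((Real.sqrt (n ⬝ᵥ n))⁻¹ • n))
    (h : ∀ n' : Fin 2 → ℝ, n' ⬝ᵥ n' = 1 → p n' → 0 ≤ (n' ⬝ᵥ a) * (n' ⬝ᵥ b)) :
    0 ≤ (n ⬝ᵥ a) * (n ⬝ᵥ b) := by
  have hpos : 0 < n ⬝ᵥ n := by
    simp only [dotProduct, Fin.sum_univ_two]
    by_contra hcon
    apply hn
    funext i
    fin_cases i <;> simp <;> nlinarith [mul_self_nonneg (n 0), mul_self_nonneg (n 1)]
  have hs := Real.sqrt_pos.2 hpos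
  have hss := Real.mul_self_sqrt hpos.le
  set s := Real.sqrt (n ⬝ᵥ n)
  have h1 := h (s⁻¹ • n) (by
    simp only [smul_dotProduct, dotProduct_smul, smul_eq_mul]
    rw [← hss]; field_simp) hp
  simp only [smul_dotProduct, smul_eq_mul] at h1
  have : (n ⬝ᵥ a) * (n ⬝ᵥ b) = (s * s) * (s⁻¹ * (n ⬝ᵥ a) * (s⁻¹ * (n ⬝ᵥ b))) := by
    field_simp
  rw [this]; positivity

/-! ### Monotonicity of the slopes across edges -/

theorem exists_smul_of_orthogonal {n b e : Fin 2 → ℝ} (hn : n ≠ 0) (hb : b ⬝ᵥ b = 1)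
    (hnb : n ⬝ᵥ b = 0) (hne : n ⬝ᵥ e = 0) : ∃ t : ℝ, e = t • b := by
  refine ⟨e ⬝ᵥ b, ?_⟩
  have hb0 : b ≠ 0 := by rintro rfl; simp at hb
  have h1 : (e - (e ⬝ᵥ b) • b) ⬝ᵥ b = 0 := by
    rw [sub_dotProduct, smul_dotProduct, hb, smul_eq_mul, mul_one, sub_self]
  have h2 : n ⬝ᵥ (e - (e ⬝ᵥ b) • b) = 0 := by
    rw [dotProduct_sub, dotProduct_smul, hnb, hne, smul_zero, sub_self]
  have h3 := dot_mul_dot_comm hb0 h1 hnb (e - (e ⬝ᵥ b) • b) n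
  rw [h2, zero_mul] at h3
  have h4 := (mul_eq_zero.1 h3).resolve_right (mt dotProduct_self_eq_zero.1 hn)
  exact sub_eq_zero.1 (dotProduct_self_eq_zero.1 h4)

/-- Crossing from `T k` to `T l` at `z` in the direction `b`, the `a`-slope does not decrease,
provided the line `z + ℝ b` avoids all vertices and `T k ∩ T l` is not a single point. Indeed, with
`n` normal to a line separating `T k` from `T l`, the jump `q l - q k` is a multiple of `n`; convexity
gives `(q l - q k) ⬝ b ≥ 0`, avoidance of vertices gives `n ⬝ b > 0`, and the sign condition on `n`
then carries the nonnegativity over from `b` to `a`. -/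
theorem slope_le_of_cross
    {Ω' : Set (Fin 2 → ℝ)} (hΩ'o : IsOpen Ω')
    {m : ℕ} {P : Fin m → Fin 3 → (Fin 2 → ℝ)}
    {T : Fin m → Set (Fin 2 → ℝ)} (hT : ∀ k, T k = convexHull ℝ (Set.range (P k)))
    (hTc : ∀ k, Convex ℝ (T k)) (hTi : ∀ k, (interior (T k)).Nonempty)
    (hdisj : ∀ k l, k ≠ l → interior (T k) ∩ interior (T l) = ∅)
    {u : (Fin 2 → ℝ) → ℝ} (hu : ConvexOn ℝ Ω' u)
    {q : Fin m → (Fin 2 → ℝ)} {c : Fin m → ℝ}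
    (huaff : ∀ k, ∀ x ∈ T k ∩ Ω', u x = (q k) ⬝ᵥ x + c k)
    {a b : Fin 2 → ℝ} (hb : b ⬝ᵥ b = 1)
    (hPM : ∀ k l, k ≠ l → ∀ n : Fin 2 → ℝ, n ⬝ᵥ n = 1 →
      (∃ x ∈ T k ∩ T l, ∃ y ∈ T k ∩ T l, x ≠ y) →
      (∀ x ∈ T k ∩ T l, ∀ y ∈ T k ∩ T l, n ⬝ᵥ (x - y) = 0) →
      0 ≤ (n ⬝ᵥ a) * (n ⬝ᵥ b))
    {z : Fin 2 → ℝ} (hz : z ∈ Ω') {k l : Fin m} (hkl : k ≠ l)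
    (hzk : z ∈ T k) (hzl : z ∈ T l)
    {ε : ℝ} (hε : 0 < ε) (hact : ∀ τ ∈ Set.Icc (0 : ℝ) ε, z + τ • b ∈ T l)
    (hvert : ∀ k i, ∀ t : ℝ, P k i ≠ z + t • b)
    (hns : ¬ (T k ∩ T l).Subsingleton) :
    q k ⬝ᵥ a ≤ q l ⬝ᵥ a := by
  obtain ⟨n, hn0, hnk, hnl⟩ := exists_separating (hTc k) (hTc l) (hTi k) (hTi l)
    (hdisj k l hkl) hzk hzl
  have hneq : ∀ x ∈ T k ∩ T l, n ⬝ᵥ x = n ⬝ᵥ z := fun x hx =>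
    le_antisymm (hnk x hx.1) (hnl x hx.2)
  obtain ⟨y, hy, hyz⟩ : ∃ y ∈ T k ∩ T l, y ≠ z := by
    by_contra! hcon
    exact hns fun x hx y hy => (hcon x hx).trans (hcon y hy).symm
  have hpm : 0 ≤ (n ⬝ᵥ a) * (n ⬝ᵥ b) := by
    refine nonneg_of_unit hn0
      (p := fun n => ∀ x ∈ T k ∩ T l, ∀ y ∈ T k ∩ T l, n ⬝ᵥ (x - y) = 0) ?_
      fun n' hn' hp => hPM k l hkl n' hn' ⟨y, hy, z, ⟨hzk, hzl⟩, hyz⟩ hp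
    intro x hx y hy
    rw [smul_dotProduct, dotProduct_sub, hneq x hx, hneq y hy, sub_self, smul_zero]
  -- otherwise the line `z + ℝ b` would be the separating line, which contains a vertex of `T k`
  have hnb0 : n ⬝ᵥ b ≠ 0 := by
    intro hnb
    have hzk' := hzk
    rw [hT k] at hzk'
    obtain ⟨i, hi⟩ := exists_vertex_eq hzk' (by rw [← hT k]; exact hnk)
    have hi' : n ⬝ᵥ (P k i - z) = 0 := by rw [dotProduct_sub, hi, sub_self]
    obtain ⟨t, ht⟩ := exists_smul_of_orthogonal hn0 hb hnb hi'
    exact hvert k i t (by rw [← ht, add_sub_cancel])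
  have hnb : 0 < n ⬝ᵥ b := by
    refine lt_of_le_of_ne ?_ hnb0.symm
    have := hnl _ (hact ε ⟨hε.le, le_rfl⟩)
    rw [dotProduct_add, dotProduct_smul, smul_eq_mul] at this
    by_contra hcon
    nlinarith
  -- both affine pieces agree along `T k ∩ T l` near `z`
  have hd : (q l - q k) ⬝ᵥ (y - z) = 0 := by
    have hlim : Filter.Tendsto (fun τ : ℝ => z + τ • (y - z)) (nhdsWithin 0 (Set.Ioi 0))
        (nhds z) := by
      have : Continuous (fun τ : ℝ => z + τ • (y - z)) := by fun_prop
      have h := this.tendsto 0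
      simp only [zero_smul, add_zero] at h
      exact h.mono_left nhdsWithin_le_nhds
    have h1 := hlim.eventually (hΩ'o.mem_nhds hz)
    have h2 : ∀ᶠ τ : ℝ in nhdsWithin 0 (Set.Ioi 0), τ ∈ Set.Ioo (0 : ℝ) 1 :=
      Ioo_mem_nhdsGT one_pos
    obtain ⟨τ, h1, h2⟩ := (h1.and h2).exists
    have h3 := ((hTc k).inter (hTc l)).add_smul_sub_mem ⟨hzk, hzl⟩ hy ⟨h2.1.le, h2.2.le⟩
    have e1 := (huaff k _ ⟨h3.1, h1⟩).symm.trans (huaff l _ ⟨h3.2, h1⟩)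
    have e2 := (huaff k _ ⟨hzk, hz⟩).symm.trans (huaff l _ ⟨hzl, hz⟩)
    simp only [dotProduct_add, dotProduct_smul, smul_eq_mul] at e1
    rw [sub_dotProduct]
    have : τ * (q l ⬝ᵥ (y - z) - q k ⬝ᵥ (y - z)) = 0 := by linarith
    exact (mul_eq_zero.1 this).resolve_left (ne_of_gt h2.1)
  -- the affine piece of `T k` lies below that of `T l` on the part of the line inside `T l`
  have hdb : 0 ≤ (q l - q k) ⬝ᵥ b := by
    have hlim : Filter.Tendsto (fun τ : ℝ => z + τ • b) (nhdsWithin 0 (Set.Ioi 0))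
        (nhds z) := by
      have : Continuous (fun τ : ℝ => z + τ • b) := by fun_prop
      have h := this.tendsto 0
      simp only [zero_smul, add_zero] at h
      exact h.mono_left nhdsWithin_le_nhds
    have h1 := hlim.eventually (hΩ'o.mem_nhds hz)
    have h2 : ∀ᶠ τ : ℝ in nhdsWithin 0 (Set.Ioi 0), τ ∈ Set.Ioo (0 : ℝ) ε :=
      Ioo_mem_nhdsGT hε
    obtain ⟨τ, h1, h2⟩ := (h1.and h2).exists
    have h3 := affine_le hΩ'o (hTc k) (hTi k) hu (huaff k) hzk hz h1
    rw [huaff l _ ⟨hact τ ⟨h2.1.le, h2.2.le⟩, h1⟩] at h3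
    have e2 := (huaff k _ ⟨hzk, hz⟩).symm.trans (huaff l _ ⟨hzl, hz⟩)
    simp only [dotProduct_add, dotProduct_smul, smul_eq_mul] at h3
    rw [sub_dotProduct]
    have : 0 ≤ τ * (q l ⬝ᵥ b - q k ⬝ᵥ b) := by linarith
    exact nonneg_of_mul_nonneg_right this h2.1
  have hcomm := dot_mul_dot_comm (sub_ne_zero.2 hyz) hd
    (by rw [dotProduct_sub, hneq y hy, sub_self]) a b
  have hna : 0 ≤ n ⬝ᵥ a := nonneg_of_mul_nonneg_left hpm hnb
  have : 0 ≤ (q l - q k) ⬝ᵥ a * (n ⬝ᵥ b) := by rw [hcomm]; positivity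
  have := nonneg_of_mul_nonneg_left this hnb
  rw [sub_dotProduct] at this
  linarith

/-- Mixed differences of `u` over parallelograms with sides parallel to `a` and `b` are
nonnegative: the difference `u (w + t b + r a) - u (w + r a)` is continuous in `r` and locally
nondecreasing to the right of all but finitely many `r`. -/
theorem mixed_difference_nonneg
    {Ω' : Set (Fin 2 → ℝ)} (hΩ'o : IsOpen Ω') (hΩ'c : Convex ℝ Ω')
    {m : ℕ} {P : Fin m → Fin 3 → (Fin 2 → ℝ)}
    (hP : ∀ k, AffineIndependent ℝ (P k))
    {T : Fin m → Set (Fin 2 → ℝ)} (hT : ∀ k, T k = convexHull ℝ (Set.range (P k)))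
    (hdisj : ∀ k l, k ≠ l → interior (T k) ∩ interior (T l) = ∅)
    (hcover : Ω' ⊆ ⋃ k, T k)
    {u : (Fin 2 → ℝ) → ℝ} (hu : ConvexOn ℝ Ω' u)
    {q : Fin m → (Fin 2 → ℝ)} {c : Fin m → ℝ}
    (huaff : ∀ k, ∀ x ∈ T k ∩ Ω', u x = (q k) ⬝ᵥ x + c k)
    {a b : Fin 2 → ℝ} (hb : b ⬝ᵥ b = 1)
    (hab : LinearIndependent ℝ ![a, b])
    (hPM : ∀ k l, k ≠ l → ∀ n : Fin 2 → ℝ, n ⬝ᵥ n = 1 →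
      (∃ x ∈ T k ∩ T l, ∃ y ∈ T k ∩ T l, x ≠ y) →
      (∀ x ∈ T k ∩ T l, ∀ y ∈ T k ∩ T l, n ⬝ᵥ (x - y) = 0) →
      0 ≤ (n ⬝ᵥ a) * (n ⬝ᵥ b))
    {w : Fin 2 → ℝ} {s t : ℝ} (hs : 0 ≤ s) (ht : 0 ≤ t)
    (h00 : w ∈ Ω') (h10 : w + s • a ∈ Ω') (h01 : w + t • b ∈ Ω')
    (h11 : w + s • a + t • b ∈ Ω') :
    0 ≤ u (w + s • a + t • b) - u (w + s • a) - u (w + t • b) + u w := by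
  have hTc : ∀ k, Convex ℝ (T k) := fun k => by rw [hT k]; exact convex_convexHull ℝ _
  have hTcl : ∀ k, IsClosed (T k) := fun k => by
    rw [hT k]; exact ((Set.finite_range (P k)).isCompact_convexHull (𝕜 := ℝ)).isClosed
  have hTi : ∀ k, (interior (T k)).Nonempty := fun k => by
    rw [hT k, interior_convexHull_nonempty_iff_affineSpan_eq_top,
      (hP k).affineSpan_eq_top_iff_card_eq_finrank_add_one]
    simp
  -- monotonicity of the `a`-slope along a line in direction `b` avoiding the vertices and the
  -- one-point intersections of two triangles
  have hline : ∀ w' : Fin 2 → ℝ, w' ∈ Ω' → w' + t • b ∈ Ω' →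
      (∀ k i, ∀ r : ℝ, P k i ≠ w' + r • b) →
      (∀ k l, k ≠ l → (T k ∩ T l).Subsingleton → ∀ r : ℝ, w' + r • b ∉ T k ∩ T l) →
      ∀ k₀, w' ∈ T k₀ → ∃ k, w' + t • b ∈ T k ∧ q k₀ ⬝ᵥ a ≤ q k ⬝ᵥ a := by
    intro w' hw0 hw1 hvert hsing k₀ hk₀
    have hclosed : IsClosed ({r : ℝ | ∃ k, w' + r • b ∈ T k ∧ q k₀ ⬝ᵥ a ≤ q k ⬝ᵥ a} ∩
        Set.Icc 0 t) := by
      refine IsClosed.inter ?_ isClosed_Icc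
      rw [Set.ofPred_exists]
      refine isClosed_iUnion_of_finite fun k => ?_
      exact ((hTcl k).preimage (by fun_prop : Continuous fun r : ℝ => w' + r • b)).and
        isClosed_const
    refine hclosed.mem_of_ge_of_forall_exists_gt (a := 0) (b := t)
      ⟨k₀, by simpa using hk₀, le_rfl⟩ ht ?_
    rintro r ⟨⟨k, hk, hslope⟩, hr⟩
    have hzΩ : w' + r • b ∈ Ω' := by
      have htpos : 0 < t := hr.1.trans_lt hr.2
      have := hΩ'c.add_smul_sub_mem hw0 hw1 (t := r / t)
        ⟨div_nonneg hr.1 ht, (div_le_one htpos).2 hr.2.le⟩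
      rwa [add_sub_cancel_left, smul_smul, div_mul_cancel₀ _ htpos.ne'] at this
    obtain ⟨l, hzl, ε, hε, hact⟩ := exists_active hΩ'o hTc hTcl hcover hzΩ b
    have hkl : q k ⬝ᵥ a ≤ q l ⬝ᵥ a := by
      by_cases hkl : k = l
      · rw [hkl]
      refine slope_le_of_cross hΩ'o hT hTc hTi hdisj hu huaff hb hPM hzΩ hkl hk hzl hε hact
        (fun k i r' h => hvert k i (r + r') (by rw [h, add_smul, add_assoc]))
        fun hss => hsing k l hkl hss r ⟨hk, hzl⟩
    have h1 : 0 < min ε (t - r) := lt_min hε (sub_pos.2 hr.2)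
    refine ⟨r + min ε (t - r), ⟨l, ?_, hslope.trans hkl⟩, by linarith,
      by linarith [min_le_right ε (t - r)]⟩
    rw [add_smul, ← add_assoc]
    exact hact _ ⟨h1.le, min_le_left _ _⟩
  -- the points to be avoided; as `a` and `b` are independent, each excludes a single value of `r`
  let X : Set (Fin 2 → ℝ) := (⋃ k, ⋃ i, {P k i}) ∪
    ⋃ k, ⋃ l, {x | (T k ∩ T l).Subsingleton ∧ x ∈ T k ∩ T l}
  have hX : X.Finite := by
    refine Set.Finite.union ?_ ?_
    · exact Set.finite_iUnion fun k => Set.finite_iUnion fun i => Set.finite_singleton _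
    · refine Set.finite_iUnion fun k => Set.finite_iUnion fun l => Set.Subsingleton.finite ?_
      rintro x ⟨h, hx⟩ y ⟨-, hy⟩
      exact h hx hy
  have hB : {r : ℝ | ∃ r' : ℝ, w + r • a + r' • b ∈ X}.Finite := by
    have : {r : ℝ | ∃ r' : ℝ, w + r • a + r' • b ∈ X} ⊆
        ⋃ x ∈ X, {r : ℝ | ∃ r' : ℝ, w + r • a + r' • b = x} := by
      rintro r ⟨r', h⟩
      exact Set.mem_biUnion h ⟨r', rfl⟩
    refine (hX.biUnion fun x _ => Set.Subsingleton.finite ?_).subset this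
    rintro r₁ ⟨t₁, h₁⟩ r₂ ⟨t₂, h₂⟩
    have h := LinearIndependent.pair_iff.1 hab (r₁ - r₂) (t₁ - t₂) (by
      have h3 := h₁.trans h₂.symm
      rw [sub_smul, sub_smul]
      rw [add_assoc, add_assoc] at h3
      have h4 := add_left_cancel h3
      rw [sub_add_sub_comm, h4, sub_self])
    exact sub_eq_zero.1 h.1
  have hseg : ∀ {p : Fin 2 → ℝ}, p ∈ Ω' → p + s • a ∈ Ω' → ∀ r ∈ Set.Icc 0 s,
      p + r • a ∈ Ω' := by
    intro p hp hps r hr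
    rcases hs.eq_or_lt with h0 | hspos
    · have : r = 0 := le_antisymm (h0 ▸ hr.2) hr.1
      simpa [this] using hp
    · have := hΩ'c.add_smul_sub_mem hp hps (t := r / s)
        ⟨div_nonneg hr.1 hs, (div_le_one hspos).2 hr.2⟩
      rwa [add_sub_cancel_left, smul_smul, div_mul_cancel₀ _ hspos.ne'] at this
  have h11' : w + t • b + s • a ∈ Ω' := by rwa [add_right_comm]
  have hucont : ContinuousOn u Ω' := hu.continuousOn hΩ'o
  have key := le_of_eventually_right_le_off_finite
    (h := fun r => u (w + t • b + r • a) - u (w + r • a)) hB.toFinset hs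
    ((hucont.comp (by fun_prop) (hseg h01 h11')).sub
      (hucont.comp (by fun_prop) (hseg h00 h10))) (by
    intro r hr hrB
    have hgood : ∀ r' : ℝ, w + r • a + r' • b ∉ X := by
      simpa using hrB
    have hz0 := hseg h00 h10 r ⟨hr.1, hr.2.le⟩
    have hz1 := hseg h01 h11' r ⟨hr.1, hr.2.le⟩
    obtain ⟨k₀, hk₀, ε, hε, hact⟩ := exists_active hΩ'o hTc hTcl hcover hz0 a
    obtain ⟨k, hk, hslope⟩ := hline (w + r • a) hz0 (by rwa [add_right_comm])
      (fun k i r' h => hgood r' (Or.inl (by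
        simp only [Set.mem_iUnion]; exact ⟨k, i, h.symm⟩)))
      (fun k l _ hss r' h => hgood r' (Or.inr (by
        simp only [Set.mem_iUnion]; exact ⟨k, l, hss, h⟩))) k₀ hk₀
    rw [add_right_comm] at hk
    -- `u` grows with slope exactly `q k₀ ⬝ a` on the lower side of the parallelogram, and at least
    -- `q k ⬝ a` on the upper side, because `q k ⬝ x + c k` minorizes `u`
    refine ⟨min ε (s - r), lt_min hε (sub_pos.2 hr.2), fun τ hτ => ?_⟩
    have hτ' : r + τ ∈ Set.Icc 0 s :=
      ⟨add_nonneg hr.1 hτ.1, by linarith [hτ.2.trans (min_le_right _ _)]⟩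
    have hy0 := hseg h00 h10 _ hτ'
    have hy1 := hseg h01 h11' _ hτ'
    have e0 := huaff k₀ _ ⟨hk₀, hz0⟩
    have e1 := huaff k _ ⟨hk, hz1⟩
    have e2 := huaff k₀ (w + (r + τ) • a) ⟨by
      rw [add_smul, ← add_assoc]; exact hact τ ⟨hτ.1, hτ.2.trans (min_le_left _ _)⟩, hy0⟩
    have e3 := affine_le hΩ'o (hTc k) (hTi k) hu (huaff k) hk hz1 hy1
    simp only [dotProduct_add, dotProduct_smul, smul_eq_mul] at e0 e1 e2 e3
    have := mul_le_mul_of_nonneg_left hslope hτ.1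
    show u (w + t • b + r • a) - u (w + r • a) ≤
      u (w + t • b + (r + τ) • a) - u (w + (r + τ) • a)
    linarith)
  simp only [zero_smul, add_zero] at key
  rw [add_right_comm w (t • b)] at key
  linarith

/-! ### From mixed differences to the distributional derivative -/

/-- Mean value theorem for mixed second differences. -/
theorem exists_mixed_difference_eq {ψ : (Fin 2 → ℝ) → ℝ} (hψ : ContDiff ℝ (⊤ : ℕ∞) ψ)
    (a b x : Fin 2 → ℝ) {ε : ℝ} (hε : 0 < ε) :
    ∃ s ∈ Set.Ioo 0 ε, ∃ t ∈ Set.Ioo 0 ε,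
      ψ (x + ε • a + ε • b) - ψ (x + ε • a) - ψ (x + ε • b) + ψ x =
        ε ^ 2 * iteratedFDeriv ℝ 2 ψ (x + s • b + t • a) ![a, b] := by
  have hd : Differentiable ℝ ψ := hψ.differentiable (by simp)
  have hd2 : Differentiable ℝ (fderiv ℝ ψ) :=
    (hψ.fderiv_right (m := 1) (by norm_cast)).differentiable (by simp)
  have hlin : ∀ (p v : Fin 2 → ℝ) (t : ℝ), HasDerivAt (fun t : ℝ => p + t • v) v t :=
    fun p v t => by simpa using ((hasDerivAt_id t).smul_const v).const_add p
  have hder : ∀ (p : Fin 2 → ℝ) (t : ℝ),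
      HasDerivAt (fun t : ℝ => ψ (p + t • b)) (fderiv ℝ ψ (p + t • b) b) t := fun p t =>
    (hd _).hasFDerivAt.comp_hasDerivAt t (hlin p b t)
  have hder2 : ∀ (p : Fin 2 → ℝ) (t : ℝ), HasDerivAt (fun t : ℝ => fderiv ℝ ψ (p + t • a) b)
      (fderiv ℝ (fderiv ℝ ψ) (p + t • a) a b) t := fun p t =>
    ((hd2 _).hasFDerivAt.comp_hasDerivAt t (hlin p a t)).clm_apply (hasDerivAt_const t b) |>.congr_deriv
      (by simp)
  have h1 : ∀ t, HasDerivAt (fun t : ℝ => ψ (x + ε • a + t • b) - ψ (x + t • b))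
      (fderiv ℝ ψ (x + ε • a + t • b) b - fderiv ℝ ψ (x + t • b) b) t := fun t =>
    (hder _ t).sub (hder _ t)
  obtain ⟨s, hs, hs'⟩ := exists_hasDerivAt_eq_slope _ _ hε
    (fun t _ => (h1 t).continuousAt.continuousWithinAt) (fun t _ => h1 t)
  obtain ⟨t, ht, ht'⟩ := exists_hasDerivAt_eq_slope _ _ hε
    (fun t _ => (hder2 (x + s • b) t).continuousAt.continuousWithinAt)
    (fun t _ => hder2 (x + s • b) t)
  refine ⟨s, hs, t, ht, ?_⟩
  rw [iteratedFDeriv_two_apply]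
  simp only [Matrix.cons_val_zero, Matrix.cons_val_one, ht', zero_smul, add_zero, sub_zero] at *
  rw [add_right_comm x (s • b), hs']
  field_simp
  ring

theorem integral_mixed {f₁ f₂ f₃ f₄ : (Fin 2 → ℝ) → ℝ} (h₁ : Integrable f₁) (h₂ : Integrable f₂)
    (h₃ : Integrable f₃) (h₄ : Integrable f₄) :
    ∫ x, (f₁ x - f₂ x - f₃ x + f₄ x) = (∫ x, f₁ x) - (∫ x, f₂ x) - (∫ x, f₃ x) + ∫ x, f₄ x := by
  have h := integral_add ((h₁.sub h₂).sub h₃) h₄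
  have h' := integral_sub (h₁.sub h₂) h₃
  have h'' := integral_sub h₁ h₂
  simp only [Pi.sub_apply] at h h' h''
  rw [h, h', h'']

/-- A continuous function with nonnegative mixed differences in the directions `a`, `b` has
nonnegative distributional mixed derivative: move the difference quotients from the test function
to `u` by translation invariance, using that the quotients of `ψ` converge uniformly. -/
theorem integral_mixed_deriv_nonneg {Ω' : Set (Fin 2 → ℝ)} (hΩ'o : IsOpen Ω')
    {u : (Fin 2 → ℝ) → ℝ} (hucont : ContinuousOn u Ω') {a b : Fin 2 → ℝ}
    (hmix : ∀ (w : Fin 2 → ℝ) (ε : ℝ), 0 ≤ ε → w ∈ Ω' → w + ε • a ∈ Ω' → w + ε • b ∈ Ω' →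
      w + ε • a + ε • b ∈ Ω' →
      0 ≤ u (w + ε • a + ε • b) - u (w + ε • a) - u (w + ε • b) + u w)
    {ψ : (Fin 2 → ℝ) → ℝ} (hψ : ContDiff ℝ (⊤ : ℕ∞) ψ) (hψc : HasCompactSupport ψ)
    (hψs : tsupport ψ ⊆ Ω') (hψ0 : ∀ x, 0 ≤ ψ x) :
    0 ≤ ∫ x, u x * iteratedFDeriv ℝ 2 ψ x ![a, b] := by
  obtain ⟨δ, hδ, hK⟩ := hψc.isCompact.exists_cthickening_subset_open hΩ'o hψs
  set K := Metric.cthickening δ (tsupport ψ) with hKdef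
  have hKc : IsCompact K := hψc.isCompact.cthickening
  -- truncating `u` to a compact neighbourhood of the support makes it integrable
  set v : (Fin 2 → ℝ) → ℝ := K.indicator u with hv
  set D : (Fin 2 → ℝ) → ℝ := fun x => iteratedFDeriv ℝ 2 ψ x ![a, b] with hD
  have hvint : Integrable v :=
    (integrable_indicator_iff hKc.isClosed.measurableSet).2
      ((hucont.mono hK).integrableOn_compact hKc)
  have hDcont : Continuous D := by
    have : Continuous (iteratedFDeriv ℝ 2 ψ) :=
      hψ.continuous_iteratedFDeriv (m := 2) (WithTop.coe_le_coe.2 le_top)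
    exact (ContinuousMultilinearMap.apply ℝ (fun _ : Fin 2 => (Fin 2 → ℝ)) ℝ ![a, b]).continuous.comp
      this
  have hDzero : ∀ x, x ∉ tsupport ψ → D x = 0 := fun x hx => by
    have : iteratedFDeriv ℝ 2 ψ x = 0 :=
      image_eq_zero_of_notMem_tsupport fun h => hx (tsupport_iteratedFDeriv_subset 2 h)
    simp [hD, this]
  have hDc : HasCompactSupport D := HasCompactSupport.intro hψc.isCompact hDzero
  have hDu : UniformContinuous D := hDc.uniformContinuous_of_continuous hDcont
  have hbd : ∀ {g : (Fin 2 → ℝ) → ℝ}, Continuous g → HasCompactSupport g →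
      Integrable (fun x => v x * g x) := fun {g} hg hgc => by
    obtain ⟨C, hC⟩ := hg.bounded_above_of_compact_support hgc
    exact hvint.mul_bdd hg.aestronglyMeasurable (Filter.Eventually.of_forall hC)
  have hrepl : ∫ x, u x * D x = ∫ x, v x * D x := by
    congr 1
    funext x
    by_cases hx : x ∈ tsupport ψ
    · rw [hv, Set.indicator_of_mem (Metric.self_subset_cthickening _ hx)]
    · rw [hDzero x hx, mul_zero, mul_zero]
  change 0 ≤ ∫ x, u x * D x
  rw [hrepl]
  have htrans : ∀ e : Fin 2 → ℝ, Continuous (fun x => ψ (x + e)) ∧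
      HasCompactSupport (fun x => ψ (x + e)) := fun e =>
    ⟨hψ.continuous.comp (by fun_prop), hψc.comp_homeomorph (Homeomorph.addRight e)⟩
  have hshift : ∀ e : Fin 2 → ℝ, ∫ x, v x * ψ (x + e) = ∫ x, v (x - e) * ψ x := fun e => by
    rw [← integral_add_right_eq_self (fun x => v (x - e) * ψ x) e]
    simp
  have hshiftint : ∀ e : Fin 2 → ℝ, Integrable (fun x => v (x - e) * ψ x) := fun e => by
    have := (hbd (htrans e).1 (htrans e).2).comp_sub_right e
    simpa using this
  have hmain : ∀ η > 0, -(η * ∫ x, |v x|) ≤ ∫ x, v x * D x := by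
    intro η hη
    obtain ⟨ρ, hρ, hρD⟩ := Metric.uniformContinuous_iff.1 hDu η hη
    obtain ⟨ε, hε, hε1⟩ : ∃ ε > 0, ε * (‖a‖ + ‖b‖ + 1) < min δ ρ := by
      have h1 : 0 < min δ ρ := lt_min hδ hρ
      have h2 : 0 < ‖a‖ + ‖b‖ + 1 := by positivity
      refine ⟨min δ ρ / 2 / (‖a‖ + ‖b‖ + 1), by positivity, ?_⟩
      rw [div_mul_cancel₀ _ h2.ne']
      linarith
    have hsmall : ∀ s ∈ Set.Icc 0 ε, ∀ t ∈ Set.Icc 0 ε, ‖s • a + t • b‖ < min δ ρ := by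
      intro s hs t ht
      calc ‖s • a + t • b‖ ≤ ‖s • a‖ + ‖t • b‖ := norm_add_le _ _
        _ = s * ‖a‖ + t * ‖b‖ := by
          rw [norm_smul, norm_smul, Real.norm_of_nonneg hs.1, Real.norm_of_nonneg ht.1]
        _ ≤ ε * ‖a‖ + ε * ‖b‖ := by
          gcongr
          · exact hs.2
          · exact ht.2
        _ ≤ ε * (‖a‖ + ‖b‖ + 1) := by nlinarith
        _ < _ := hε1
    set Δ : (Fin 2 → ℝ) → ℝ := fun x =>
      ψ (x + (ε • a + ε • b)) - ψ (x + ε • a) - ψ (x + ε • b) + ψ (x + 0) with hΔ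
    have hΔD : ∀ x, |Δ x / ε ^ 2 - D x| ≤ η := by
      intro x
      obtain ⟨s, hs, t, ht, h⟩ := exists_mixed_difference_eq hψ a b x hε
      have h' : Δ x / ε ^ 2 = D (x + s • b + t • a) := by
        simp only [hΔ, ← add_assoc, add_zero]
        rw [h]
        field_simp
        rfl
      rw [h', ← Real.dist_eq]
      refine (hρD ?_).le
      rw [dist_eq_norm, add_assoc, add_sub_cancel_left, add_comm]
      exact (hsmall t ⟨ht.1.le, ht.2.le⟩ s ⟨hs.1.le, hs.2.le⟩).trans_le (min_le_right _ _)
    have hi : ∀ e, Integrable (fun x => v x * ψ (x + e)) := fun e =>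
      hbd (htrans e).1 (htrans e).2
    have hΔeq : (fun x => v x * Δ x) = fun x => v x * ψ (x + (ε • a + ε • b)) -
        v x * ψ (x + ε • a) - v x * ψ (x + ε • b) + v x * ψ (x + 0) := by
      funext x; simp only [hΔ]; ring
    have hΔint : Integrable (fun x => v x * Δ x) := by
      rw [hΔeq]
      exact (((hi _).sub (hi _)).sub (hi _)).add (hi _)
    have hΔnn : 0 ≤ ∫ x, v x * Δ x := by
      rw [hΔeq, integral_mixed (hi _) (hi _) (hi _) (hi _), hshift, hshift, hshift, hshift,
        ← integral_mixed (hshiftint _) (hshiftint _) (hshiftint _) (hshiftint _)]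
      refine integral_nonneg fun x => ?_
      show 0 ≤ v (x - (ε • a + ε • b)) * ψ x - v (x - ε • a) * ψ x - v (x - ε • b) * ψ x +
        v (x - 0) * ψ x
      by_cases hx : x ∈ tsupport ψ
      · have hmem : ∀ s ∈ Set.Icc 0 ε, ∀ t ∈ Set.Icc 0 ε, x - (s • a + t • b) ∈ K := by
          intro s hs t ht
          refine Metric.mem_cthickening_of_dist_le _ x _ _ hx ?_
          rw [dist_eq_norm, sub_sub_cancel_left, norm_neg]
          exact ((hsmall s hs t ht).trans_le (min_le_left _ _)).le
        have hε0 : (0 : ℝ) ∈ Set.Icc 0 ε := ⟨le_rfl, hε.le⟩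
        have hεε : ε ∈ Set.Icc 0 ε := ⟨hε.le, le_rfl⟩
        have m11 := hmem ε hεε ε hεε
        have m10 := hmem ε hεε 0 hε0
        have m01 := hmem 0 hε0 ε hεε
        have m00 := hmem 0 hε0 0 hε0
        simp only [zero_smul, add_zero, zero_add] at m10 m01 m00
        have e1 : x - (ε • a + ε • b) + ε • a = x - ε • b := by abel
        have e2 : x - (ε • a + ε • b) + ε • b = x - ε • a := by abel
        have e3 : x - ε • b + ε • b = x - 0 := by abel
        have := hmix (x - (ε • a + ε • b)) ε hε.le (hK m11) (by rw [e1]; exact hK m01)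
          (by rw [e2]; exact hK m10) (by rw [e1, e3]; exact hK m00)
        rw [e1, e2, e3] at this
        rw [hv, Set.indicator_of_mem m11, Set.indicator_of_mem m10, Set.indicator_of_mem m01,
          Set.indicator_of_mem m00]
        nlinarith [mul_nonneg this (hψ0 x)]
      · simp [image_eq_zero_of_notMem_tsupport hx]
    have hle : ∫ x, (v x * Δ x / ε ^ 2 - η * |v x|) ≤ ∫ x, v x * D x := by
      refine integral_mono ((hΔint.div_const _).sub (hvint.abs.const_mul η))
        (hbd hDcont hDc) fun x => ?_
      show v x * Δ x / ε ^ 2 - η * |v x| ≤ v x * D x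
      have h1 : v x * (Δ x / ε ^ 2 - D x) ≤ |v x| * η :=
        (le_abs_self _).trans (by
          rw [abs_mul]; exact mul_le_mul_of_nonneg_left (hΔD x) (abs_nonneg _))
      rw [mul_div_assoc]
      linarith
    rw [integral_sub (hΔint.div_const _) (hvint.abs.const_mul η), integral_div,
      integral_const_mul] at hle
    have : 0 ≤ (∫ x, v x * Δ x) / ε ^ 2 := by positivity
    linarith
  by_contra! hneg
  have hI : 0 ≤ ∫ x, |v x| := integral_nonneg fun x => abs_nonneg _
  set I := ∫ x, |v x|
  set J := ∫ x, v x * D x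
  have := hmain (-J / (2 * (I + 1))) (div_pos (by linarith) (by positivity))
  have h2 : -J / (2 * (I + 1)) * I ≤ -J / 2 := by
    rw [div_mul_eq_mul_div, div_le_div_iff₀ (by positivity) two_pos]
    nlinarith
  linarith

/-- Theorem 2 of the paper: on a triangulation satisfying property (PM) for the
directions `a, b`, every convex piecewise affine function has nonnegative distributional
mixed second derivative `∂²u/(∂a∂b)` on `Ω'`. -/
theorem convex_piecewise_affine_distributional_mixed_deriv_nonneg
    (Ω' : Set (Fin 2 → ℝ)) (hΩ'o : IsOpen Ω') (hΩ'c : Convex ℝ Ω')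
    (m : ℕ) (P : Fin m → Fin 3 → (Fin 2 → ℝ))
    (hP : ∀ k, AffineIndependent ℝ (P k))
    (T : Fin m → Set (Fin 2 → ℝ)) (hT : ∀ k, T k = convexHull ℝ (Set.range (P k)))
    (hdisj : ∀ k l, k ≠ l → interior (T k) ∩ interior (T l) = ∅)
    (hcover : Ω' ⊆ ⋃ k, T k)
    (u : (Fin 2 → ℝ) → ℝ) (hu : ConvexOn ℝ Ω' u)
    (q : Fin m → (Fin 2 → ℝ)) (c : Fin m → ℝ)
    (huaff : ∀ k, ∀ x ∈ T k ∩ Ω', u x = (q k) ⬝ᵥ x + c k)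
    (a b : Fin 2 → ℝ) (ha : a ⬝ᵥ a = 1) (hb : b ⬝ᵥ b = 1)
    (hab : LinearIndependent ℝ ![a, b])
    (hPM : ∀ k l, k ≠ l → ∀ n : Fin 2 → ℝ, n ⬝ᵥ n = 1 →
      (∃ x ∈ T k ∩ T l, ∃ y ∈ T k ∩ T l, x ≠ y) →
      (∀ x ∈ T k ∩ T l, ∀ y ∈ T k ∩ T l, n ⬝ᵥ (x - y) = 0) →
      0 ≤ (n ⬝ᵥ a) * (n ⬝ᵥ b)) :
    ∀ ψ : (Fin 2 → ℝ) → ℝ, ContDiff ℝ (⊤ : ℕ∞) ψ → HasCompactSupport ψ →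
      tsupport ψ ⊆ Ω' → (∀ x, 0 ≤ ψ x) →
      0 ≤ ∫ x, u x * iteratedFDeriv ℝ 2 ψ x ![a, b] := by
  intro ψ hψ hψc hψs hψ0
  exact integral_mixed_deriv_nonneg hΩ'o (hu.continuousOn hΩ'o) (fun w ε hε h00 h10 h01 h11 =>
    mixed_difference_nonneg hΩ'o hΩ'c hP hT hdisj hcover hu huaff hb hab hPM hε hε
      h00 h10 h01 h11) hψ hψc hψs hψ0
end

section
/- Let u : ℝ² → ℝ be four times continuously differentiable and let z ∈ ℝ², with e₁ = (1,0), e₂ = (0,1). Define A(h) = u(z+he₁) + u(z−he₁) − 2u(z), B(h) = u(z+he₂) + u(z−he₂) − 2u(z), and M(h) = 2u(z) − u(z+he₁) − u(z−he₁) − u(z+he₂) − u(z−he₂) + u(z+h(e₁+e₂)) + u(z−h(e₁+e₂)). Then, as h → 0, A(h)·B(h) − M(h)²/4 = ( (∂²u/∂x²)(z)·(∂²u/∂y²)(z) − (∂²u/∂x∂y)(z)² ) · h⁴ + O(h⁵). -/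
/-!
Write `S v h = u (z + h v) + u (z - h v) - 2 u z` for the second difference in direction `v`.
Taylor's formula for `t ↦ u (z + t v)` gives `S v h = D²u(z)(v, v) h² + O(h³)`, the odd-order terms
cancelling. Here `A = S e₁`, `B = S e₂` and `M = S (e₁ + e₂) - S e₁ - S e₂`, so by polarization and
the symmetry of `D²u(z)`, `M h = 2 D²u(z)(e₁, e₂) h² + O(h³)`. Multiplying these expansions gives
the claim.
-/

open Asymptotics Filter

/-- The second derivative at `0` of the restriction of `u` to a line is the Hessian quadratic form
in the direction of that line. -/
lemma iteratedDeriv_two_line {E : Type*} [NormedAddCommGroup E] [NormedSpace ℝ E]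
    {u : E → ℝ} (hu : ContDiff ℝ 4 u) (z v : E) :
    iteratedDeriv 2 (fun t : ℝ => u (z + t • v)) 0 = iteratedFDeriv ℝ 2 u z ![v, v] := by
  have line (t : ℝ) : HasDerivAt (fun t : ℝ => z + t • v) v t := by
    simpa using ((hasDerivAt_id t).smul_const v).const_add z
  have first : deriv (fun t : ℝ => u (z + t • v)) = fun t => fderiv ℝ u (z + t • v) v := by
    funext t
    exact (((hu.differentiable (by norm_num)) _).hasFDerivAt.comp_hasDerivAt t (line t)).deriv
  have hd : Differentiable ℝ (fderiv ℝ u) :=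
    (hu.fderiv_right (m := 1) (by norm_num)).differentiable (by norm_num)
  have second : HasDerivAt (fun t : ℝ => fderiv ℝ u (z + t • v)) (fderiv ℝ (fderiv ℝ u) z v) 0 :=
    HasFDerivAt.comp_hasDerivAt_of_eq (0 : ℝ) (hd z).hasFDerivAt (line 0) (by simp)
  have third : HasDerivAt (fun t : ℝ => fderiv ℝ u (z + t • v) v)
      (fderiv ℝ (fderiv ℝ u) z v v) 0 := by
    simpa using second.clm_apply (hasDerivAt_const (0 : ℝ) v)
  rw [iteratedDeriv_succ, iteratedDeriv_one, first, iteratedFDeriv_two_apply]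
  exact third.deriv

lemma second_difference_isBigO {E : Type*} [NormedAddCommGroup E] [NormedSpace ℝ E]
    {u : E → ℝ} (hu : ContDiff ℝ 4 u) (z v : E) :
    (fun h : ℝ => u (z + h • v) + u (z - h • v) - 2 * u z - iteratedFDeriv ℝ 2 u z ![v, v] * h ^ 2)
      =O[nhds 0] (fun h : ℝ => h ^ 3) := by
  have hg : ContDiff ℝ ((3 : ℕ) : WithTop ℕ∞) (fun t : ℝ => u (z + t • v)) :=
    (hu.of_le (by norm_num)).comp (by fun_prop)
  have plus := (taylor_isLittleO_univ (x₀ := 0) hg).isBigO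
  have neg : Tendsto (fun h : ℝ => -h) (nhds 0) (nhds 0) := by
    simpa using (continuous_neg.tendsto (0 : ℝ))
  have minus := plus.comp_tendsto neg
  have minus' := minus.trans (k := fun h : ℝ => h ^ 3) (by
    refine IsBigO.of_bound 1 (Eventually.of_forall fun h => ?_)
    simp)
  have plus' := plus.trans (k := fun h : ℝ => h ^ 3) (by simpa using isBigO_refl _ _)
  refine (plus'.add minus').congr_left fun h => ?_
  rw [← iteratedDeriv_two_line hu z v]
  simp [iteratedDerivWithin_univ, sub_eq_add_neg]
  ring

/-- Leading terms of order `h²` with errors `O(h³)` multiply to one of order `h⁴` with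
error `O(h⁵)`. -/
lemma mul_isBigO {f g : ℝ → ℝ} {a b : ℝ}
    (hf : (fun h : ℝ => f h - a * h ^ 2) =O[nhds 0] (fun h : ℝ => h ^ 3))
    (hg : (fun h : ℝ => g h - b * h ^ 2) =O[nhds 0] (fun h : ℝ => h ^ 3)) :
    (fun h : ℝ => f h * g h - a * b * h ^ 4) =O[nhds 0] (fun h : ℝ => h ^ 5) := by
  have cube : (fun h : ℝ => h ^ 3) =O[nhds 0] (fun h : ℝ => h ^ 2) :=
    (isLittleO_pow_pow (by norm_num)).isBigO
  have sq (c : ℝ) : (fun h : ℝ => c * h ^ 2) =O[nhds 0] (fun h : ℝ => h ^ 2) :=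
    isBigO_const_mul_self c _ _
  have hg2 : g =O[nhds 0] (fun h : ℝ => h ^ 2) :=
    ((hg.trans cube).add (sq b)).congr_left fun h => by ring
  refine ((hf.mul hg2).add (((sq a).mul hg).congr_right (g₂ := fun h => h ^ 3 * h ^ 2)
    fun h => by ring)).congr (fun h => by ring) (fun h => by ring)

/-- Consistency of the weak `P₁` discretization of the determinant of the Hessian:
with `A(h), B(h)` the second differences in the coordinate directions and `M(h)` the mixed
difference, `A(h)B(h) − M(h)²/4 = (u_{xx}u_{yy} − u_{xy}²)(z) h⁴ + O(h⁵)` for `u ∈ C⁴`. -/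
theorem discrete_hessian_determinant_consistent
    (u : (Fin 2 → ℝ) → ℝ) (hu : ContDiff ℝ 4 u) (z : Fin 2 → ℝ)
    (e₁ e₂ : Fin 2 → ℝ) (he₁ : e₁ = ![1, 0]) (he₂ : e₂ = ![0, 1])
    (A B M : ℝ → ℝ)
    (hA : ∀ h : ℝ, A h = u (z + h • e₁) + u (z - h • e₁) - 2 * u z)
    (hB : ∀ h : ℝ, B h = u (z + h • e₂) + u (z - h • e₂) - 2 * u z)
    (hM : ∀ h : ℝ, M h = 2 * u z - u (z + h • e₁) - u (z - h • e₁)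
        - u (z + h • e₂) - u (z - h • e₂)
        + u (z + h • (e₁ + e₂)) + u (z - h • (e₁ + e₂))) :
    (fun h : ℝ => A h * B h - M h ^ 2 / 4
        - (iteratedFDeriv ℝ 2 u z ![e₁, e₁] * iteratedFDeriv ℝ 2 u z ![e₂, e₂]
            - iteratedFDeriv ℝ 2 u z ![e₁, e₂] ^ 2) * h ^ 4)
      =O[nhds 0] (fun h : ℝ => h ^ 5) := by
  have dA := second_difference_isBigO hu z e₁
  have dB := second_difference_isBigO hu z e₂
  have dC := second_difference_isBigO hu z (e₁ + e₂)
  have polar : iteratedFDeriv ℝ 2 u z ![e₁ + e₂, e₁ + e₂]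
      = iteratedFDeriv ℝ 2 u z ![e₁, e₁] + iteratedFDeriv ℝ 2 u z ![e₂, e₂]
        + 2 * iteratedFDeriv ℝ 2 u z ![e₁, e₂] := by
    have sym := (hu.contDiffAt (x := z)).isSymmSndFDerivAt (by simp; norm_num) e₁ e₂
    simp only [iteratedFDeriv_two_apply]
    simp [sym]
    ring
  have hA' : (fun h => A h - iteratedFDeriv ℝ 2 u z ![e₁, e₁] * h ^ 2)
      =O[nhds 0] (fun h : ℝ => h ^ 3) := by simpa only [hA] using dA
  have hB' : (fun h => B h - iteratedFDeriv ℝ 2 u z ![e₂, e₂] * h ^ 2)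
      =O[nhds 0] (fun h : ℝ => h ^ 3) := by simpa only [hB] using dB
  have hM' : (fun h => M h - (2 * iteratedFDeriv ℝ 2 u z ![e₁, e₂]) * h ^ 2)
      =O[nhds 0] (fun h : ℝ => h ^ 3) := by
    refine ((dC.sub dA).sub dB).congr_left fun h => ?_
    rw [hM, polar]
    ring
  refine ((mul_isBigO hA' hB').sub ((mul_isBigO hM' hM').const_mul_left (1 / 4))).congr_left
    fun h => ?_
  ring
end

section
/- Let p₁, p₂, p₃, p₄ ∈ ℝ² be such that (p₁,p₂,p₃) and (p₁,p₂,p₄) are each affinely independent and p₃, p₄ lie strictly on opposite sides of the line through p₁ and p₂. Set T₁ = conv{p₁,p₂,p₃} and T₂ = conv{p₁,p₂,p₄}, and let n be the unit vector orthogonal to p₂ − p₁ with n·(p₄ − p₁) > 0. Let f₁, f₂ : ℝ² → ℝ be C² functions with f₁ = f₂ on the segment [p₁,p₂], and let u : ℝ² → ℝ satisfy u = f₁ on T₁ and u = f₂ on T₂. Then for all a, b ∈ ℝ² and every C^∞ function φ with compact support contained in the interior of T₁ ∪ T₂: ∫_{T₁∪T₂} u(x) D²φ(x)[a,b] dx =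 (n·a)(n·b) ‖p₂−p₁‖ ∫₀¹ (∇f₂ − ∇f₁)(p₁+t(p₂−p₁)) · n · φ(p₁+t(p₂−p₁)) dt + ∫_{T₁} D²f₁(x)[a,b] φ(x) dx + ∫_{T₂} D²f₂(x)[a,b] φ(x) dx. -/
open RealInnerProductSpace MeasureTheory

/-!
Since `φ` is supported inside `T₁ ∪ T₂`, and `T₁`, `T₂` lie on opposite sides of the line through
`p₁`, `p₂`, each triangle may be replaced by the half-plane containing it. On a half-plane with
outer normal `ν` and boundary line `L`, the divergence theorem (`half_plane`) applied to
`f ∂ₐ∂ᵦφ - ∂ₐ∂ᵦf φ = ∂ₐ(f ∂ᵦφ) - ∂ᵦ(∂ₐf φ)` gives the boundary term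
`(ν·a) ∫_L f ∂ᵦφ - (ν·b) ∫_L ∂ₐf φ` (`green`, `green_triangle`).

Adding the contributions of `f₁` with `ν = n` and `f₂` with `ν = -n`, the first terms cancel because
`f₁ = f₂` on `L ∩ supp φ`, which is contained in the edge (`triangle_side`). In the second ones,
`∂ₐ(f₂ - f₁) = (n·a) ∂ₙ(f₂ - f₁)` since the tangential derivative of `f₂ - f₁` vanishes on the
edge. Reparametrising `L` (`integral_edge`) produces the factor `‖p₂ - p₁‖`.
-/

/-- Cartesian coordinates on the plane with origin `p` and axes along the orthonormal basis `e`. The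
line and half-planes of interest are `⟪e 1, x - p⟫ = 0`, `≤ 0`, i.e. conditions on `q.2` alone. -/
noncomputable def frame (e : OrthonormalBasis (Fin 2) ℝ (EuclideanSpace ℝ (Fin 2)))
    (p : EuclideanSpace ℝ (Fin 2)) (q : ℝ × ℝ) : EuclideanSpace ℝ (Fin 2) :=
  p + (q.1 • e 0 + q.2 • e 1)

lemma frame_measurePreserving_and_embedding
    (e : OrthonormalBasis (Fin 2) ℝ (EuclideanSpace ℝ (Fin 2)))
    (p : EuclideanSpace ℝ (Fin 2)) :
    MeasurePreserving (frame e p) ∧ MeasurableEmbedding (frame e p) := by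
  have h1 := (volume_preserving_finTwoArrow ℝ).symm
  have h2 := (EuclideanSpace.volume_preserving_symm_measurableEquiv_toLp (Fin 2)).symm
  have h3 := e.measurePreserving_measurableEquiv.symm
  have h4 := measurePreserving_add_left (volume : Measure (EuclideanSpace ℝ (Fin 2))) p
  have key : frame e p = (fun x => p + x) ∘ e.measurableEquiv.symm ∘
      (MeasurableEquiv.toLp 2 (Fin 2 → ℝ)) ∘ MeasurableEquiv.finTwoArrow.symm := by
    funext q
    have : e.measurableEquiv.symm ((MeasurableEquiv.toLp 2 (Fin 2 → ℝ))
        (MeasurableEquiv.finTwoArrow.symm q)) = q.1 • e 0 + q.2 • e 1 := by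
      have := e.sum_repr_symm ((MeasurableEquiv.toLp 2 (Fin 2 → ℝ))
        (MeasurableEquiv.finTwoArrow.symm q))
      rw [Fin.sum_univ_two] at this
      exact this.symm
    simp only [frame, Function.comp_apply, this]
  rw [key]
  refine ⟨h4.comp (h3.comp (h2.comp h1)), ?_⟩
  exact (MeasurableEquiv.addLeft p).measurableEmbedding.comp
    (e.measurableEquiv.symm.measurableEmbedding.comp
    ((MeasurableEquiv.measurableEmbedding _).comp (MeasurableEquiv.measurableEmbedding _)))

lemma frame_preimage (e : OrthonormalBasis (Fin 2) ℝ (EuclideanSpace ℝ (Fin 2)))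
    (p : EuclideanSpace ℝ (Fin 2)) (S : Set ℝ) :
    frame e p ⁻¹' {x | ⟪e 1, x - p⟫ ∈ S} = Set.univ ×ˢ S := by
  ext q
  have : ⟪e 1, q.1 • e 0 + q.2 • e 1⟫ = q.2 := by
    rw [inner_add_right, real_inner_smul_right, real_inner_smul_right,
      e.inner_eq_zero (by decide : (1 : Fin 2) ≠ 0), e.inner_eq_one]
    ring
  simp [frame, this]

lemma line_null (e : OrthonormalBasis (Fin 2) ℝ (EuclideanSpace ℝ (Fin 2)))
    (p : EuclideanSpace ℝ (Fin 2)) :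
    volume {x | ⟪e 1, x - p⟫ = 0} = 0 := by
  obtain ⟨h1, h2⟩ := frame_measurePreserving_and_embedding e p
  have := h1.measure_preimage_emb h2 {x | ⟪e 1, x - p⟫ ∈ ({0} : Set ℝ)}
  rw [frame_preimage] at this
  simp only [Set.mem_singleton_iff] at this
  rw [← this, Measure.volume_eq_prod, Measure.prod_prod]
  simp

lemma hasCompactSupport_line {G : EuclideanSpace ℝ (Fin 2) → ℝ} (hG : HasCompactSupport G)
    (c : EuclideanSpace ℝ (Fin 2)) {v : EuclideanSpace ℝ (Fin 2)} (hv : ‖v‖ = 1) :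
    HasCompactSupport (fun t : ℝ => G (c + t • v)) := by
  refine hG.comp_isClosedEmbedding (g := fun t : ℝ => c + t • v) (Isometry.isClosedEmbedding ?_)
  refine Isometry.of_dist_eq fun s t => ?_
  rw [dist_add_left, dist_eq_norm, ← sub_smul, norm_smul, hv, mul_one, Real.dist_eq,
    Real.norm_eq_abs]

lemma deriv_line {G : EuclideanSpace ℝ (Fin 2) → ℝ} (hG : Differentiable ℝ G)
    (c v : EuclideanSpace ℝ (Fin 2)) (t : ℝ) :
    HasDerivAt (fun t : ℝ => G (c + t • v)) (fderiv ℝ G (c + t • v) v) t := by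
  have h : HasDerivAt (fun t : ℝ => c + t • v) v t := by
    simpa using ((hasDerivAt_id t).smul_const v).const_add c
  exact (hG (c + t • v)).hasFDerivAt.comp_hasDerivAt t h

/-- Divergence theorem on a half-plane with outer normal `e 1`: only the normal part of `a`
contributes, by the fundamental theorem of calculus along lines parallel to `e 1` and `e 0`. -/
lemma half_plane (e : OrthonormalBasis (Fin 2) ℝ (EuclideanSpace ℝ (Fin 2)))
    (p : EuclideanSpace ℝ (Fin 2)) {G : EuclideanSpace ℝ (Fin 2) → ℝ} (hG : ContDiff ℝ 1 G)
    (hc : HasCompactSupport G) (a : EuclideanSpace ℝ (Fin 2)) :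
    ∫ x in {x | ⟪e 1, x - p⟫ ≤ 0}, fderiv ℝ G x a =
      ⟪e 1, a⟫ * ∫ s : ℝ, G (p + s • e 0) := by
  obtain ⟨h1, h2⟩ := frame_measurePreserving_and_embedding e p
  have hd := hG.differentiable one_ne_zero
  have hint : ∀ v, Integrable (fun x => fderiv ℝ G x v) := fun v =>
    ((hG.continuous_fderiv one_ne_zero).clm_apply continuous_const).integrable_of_hasCompactSupport
      (hc.fderiv_apply (𝕜 := ℝ) v)
  have hint' : ∀ v, Integrable (fun q => fderiv ℝ G (frame e p q) v) := fun v =>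
    (h1.integrable_comp_emb h2).2 (hint v)
  have hline : ∀ c (i : Fin 2), ContDiff ℝ 1 (fun t : ℝ => G (c + t • e i)) := fun c i =>
    hG.comp (by fun_prop)
  have hpull : ∀ v, ∫ x in {x | ⟪e 1, x - p⟫ ≤ 0}, fderiv ℝ G x v
      = ∫ q in Set.univ ×ˢ Set.Iic (0 : ℝ), fderiv ℝ G (frame e p q) v := by
    intro v
    rw [← frame_preimage e p (Set.Iic 0)]
    exact (h1.setIntegral_preimage_emb h2 (fun x => fderiv ℝ G x v) _).symm
  have hn : ∫ x in {x | ⟪e 1, x - p⟫ ≤ 0}, fderiv ℝ G x (e 1) = ∫ s : ℝ, G (p + s • e 0) := by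
    rw [hpull, Measure.volume_eq_prod, setIntegral_prod _ (hint' _).integrableOn,
      Measure.restrict_univ]
    refine integral_congr_ae (Filter.Eventually.of_forall fun s => ?_)
    have := HasCompactSupport.integral_Iic_deriv_eq (hline (p + s • e 0) 1)
      (hasCompactSupport_line hc _ (e.norm_eq_one 1)) 0
    simp only [fun t => (deriv_line hd (p + s • e 0) (e 1) t).deriv] at this
    simpa [frame, add_assoc] using this
  have ht : ∫ x in {x | ⟪e 1, x - p⟫ ≤ 0}, fderiv ℝ G x (e 0) = 0 := by
    rw [hpull, Measure.volume_eq_prod, ← setIntegral_prod_swap, setIntegral_prod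
      (fun z : ℝ × ℝ => fderiv ℝ G (frame e p z.swap) (e 0)) (hint' _).swap.integrableOn, Measure.restrict_univ]
    refine integral_eq_zero_of_ae (Filter.Eventually.of_forall fun r => ?_)
    have := integral_eq_zero_of_hasDerivAt_of_integrable
      (deriv_line hd (p + r • e 1) (e 0))
      (by
        have := ((hline (p + r • e 1) 0).continuous_deriv le_rfl).integrable_of_hasCompactSupport
          (hasCompactSupport_line hc _ (e.norm_eq_one 0)).deriv (μ := volume)
        rwa [funext fun t => (deriv_line hd (p + r • e 1) (e 0) t).deriv] at this)
      ((hline (p + r • e 1) 0).continuous.integrable_of_hasCompactSupport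
          (hasCompactSupport_line hc _ (e.norm_eq_one 0)))
    simpa [frame, add_assoc, add_comm, add_left_comm] using this
  have ha : ∀ x, fderiv ℝ G x a
      = ⟪e 0, a⟫ * fderiv ℝ G x (e 0) + ⟪e 1, a⟫ * fderiv ℝ G x (e 1) := by
    intro x
    conv_lhs => rw [← e.sum_repr' a, Fin.sum_univ_two]
    simp
  simp only [ha]
  rw [integral_add ((hint _).const_mul _).integrableOn ((hint _).const_mul _).integrableOn,
    integral_const_mul, integral_const_mul, hn, ht]
  ring

/-- Green's second identity on a half-plane, obtained from
`f ∂ₐ∂ᵦφ - ∂ₐ∂ᵦf φ = ∂ₐ(f ∂ᵦφ) - ∂ᵦ(∂ₐf φ)`. -/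
lemma green (e : OrthonormalBasis (Fin 2) ℝ (EuclideanSpace ℝ (Fin 2)))
    (p : EuclideanSpace ℝ (Fin 2)) {f φ : EuclideanSpace ℝ (Fin 2) → ℝ} (hf : ContDiff ℝ 2 f)
    (hφ : ContDiff ℝ 2 φ) (hc : HasCompactSupport φ) (a b : EuclideanSpace ℝ (Fin 2)) :
    ∫ x in {x | ⟪e 1, x - p⟫ ≤ 0}, f x * iteratedFDeriv ℝ 2 φ x ![a, b] =
      (∫ x in {x | ⟪e 1, x - p⟫ ≤ 0}, iteratedFDeriv ℝ 2 f x ![a, b] * φ x)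
      + (⟪e 1, a⟫ * (∫ s : ℝ, f (p + s • e 0) * fderiv ℝ φ (p + s • e 0) b)
      - ⟪e 1, b⟫ * ∫ s : ℝ, fderiv ℝ f (p + s • e 0) a * φ (p + s • e 0)) := by
  have hf1 : ContDiff ℝ 1 f := hf.of_le (by norm_num)
  have hφ1 : ContDiff ℝ 1 φ := hφ.of_le (by norm_num)
  have hdf : ContDiff ℝ 1 (fderiv ℝ f) := hf.fderiv_right (by norm_num)
  have hdφ : ContDiff ℝ 1 (fderiv ℝ φ) := hφ.fderiv_right (by norm_num)
  have hA1 : ContDiff ℝ 1 (fun x => f x * fderiv ℝ φ x b) :=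
    hf1.mul (hdφ.clm_apply contDiff_const)
  have hB1 : ContDiff ℝ 1 (fun x => fderiv ℝ f x a * φ x) :=
    (hdf.clm_apply contDiff_const).mul hφ1
  have hA2 : HasCompactSupport (fun x => f x * fderiv ℝ φ x b) :=
    (hc.fderiv_apply (𝕜 := ℝ) b).mul_left
  have hB2 : HasCompactSupport (fun x => fderiv ℝ f x a * φ x) := hc.mul_left
  have hA := half_plane e p hA1 hA2 a
  have hB := half_plane e p hB1 hB2 b
  have hint : ∀ {G : EuclideanSpace ℝ (Fin 2) → ℝ}, ContDiff ℝ 1 G → HasCompactSupport G →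
      ∀ v, Integrable (fun x => fderiv ℝ G x v) := fun hG hc v =>
    ((hG.continuous_fderiv one_ne_zero).clm_apply continuous_const).integrable_of_hasCompactSupport
      (hc.fderiv_apply (𝕜 := ℝ) v)
  have hC : Integrable (fun x => iteratedFDeriv ℝ 2 f x ![a, b] * φ x) := by
    refine Continuous.integrable_of_hasCompactSupport ?_ hc.mul_left
    refine Continuous.mul ?_ hφ.continuous
    simp only [iteratedFDeriv_two_apply]
    exact ((hdf.continuous_fderiv one_ne_zero).clm_apply continuous_const).clm_apply
      continuous_const
  have hpt : ∀ x, f x * iteratedFDeriv ℝ 2 φ x ![a, b] = iteratedFDeriv ℝ 2 f x ![a, b] * φ x +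
      (fderiv ℝ (fun x => f x * fderiv ℝ φ x b) x a
        - fderiv ℝ (fun x => fderiv ℝ f x a * φ x) x b) := by
    intro x
    have h1 := (hf1.differentiable one_ne_zero x).hasFDerivAt
    have h2 := (hφ1.differentiable one_ne_zero x).hasFDerivAt
    have h3 := (hdf.differentiable one_ne_zero x).hasFDerivAt.clm_apply (hasFDerivAt_const a x)
    have h4 := (hdφ.differentiable one_ne_zero x).hasFDerivAt.clm_apply (hasFDerivAt_const b x)
    have hs : fderiv ℝ (fderiv ℝ f) x a b = fderiv ℝ (fderiv ℝ f) x b a :=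
      (hf.contDiffAt.isSymmSndFDerivAt (by simp)) a b
    rw [(h1.fun_mul h4).fderiv, (h3.fun_mul h2).fderiv]
    simp [iteratedFDeriv_two_apply, hs]
    ring
  simp only [hpt]
  have hAB : Integrable (fun x => fderiv ℝ (fun x => f x * fderiv ℝ φ x b) x a
      - fderiv ℝ (fun x => fderiv ℝ f x a * φ x) x b) :=
    (hint hA1 hA2 a).sub (hint hB1 hB2 b)
  rw [integral_add hC.integrableOn hAB.integrableOn,
    integral_sub (hint hA1 hA2 a).integrableOn (hint hB1 hB2 b).integrableOn, hA, hB]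

lemma exists_frame {v n : EuclideanSpace ℝ (Fin 2)} (hv : ‖v‖ = 1) (hn : ‖n‖ = 1)
    (h : ⟪n, v⟫ = 0) :
    ∃ e : OrthonormalBasis (Fin 2) ℝ (EuclideanSpace ℝ (Fin 2)), e 0 = v ∧ e 1 = n := by
  have ho : Orthonormal ℝ ![v, n] := by
    refine ⟨fun i => by fin_cases i <;> simpa, fun i j hij => ?_⟩
    fin_cases i <;> fin_cases j <;> simp_all [real_inner_comm]
  have hb := coe_basisOfOrthonormalOfCardEqFinrank ho (by simp)
  refine ⟨(basisOfOrthonormalOfCardEqFinrank ho (by simp)).toOrthonormalBasis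
    (by rw [hb]; exact ho), ?_, ?_⟩ <;> simp [hb]

/-- A triangle with third vertex strictly below the line through `p₁`, `p₂` lies weakly below it and
meets it only in the edge `[p₁, p₂]`. -/
lemma triangle_side {p₁ p₂ q n : EuclideanSpace ℝ (Fin 2)} (h0 : ⟪n, p₂ - p₁⟫ = 0)
    (hq : ⟪n, q - p₁⟫ < 0) {x : EuclideanSpace ℝ (Fin 2)}
    (hx : x ∈ convexHull ℝ {p₁, p₂, q}) :
    ⟪n, x - p₁⟫ < 0 ∨ (⟪n, x - p₁⟫ = 0 ∧ x ∈ segment ℝ p₁ p₂) := by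
  have hset : ({p₁, p₂, q} : Set (EuclideanSpace ℝ (Fin 2))) = insert q {p₁, p₂} := by
    ext y; simp; tauto
  rw [hset, convexHull_insert (by simp), convexHull_pair, mem_convexJoin] at hx
  obtain ⟨q', hq', y, hy, hx⟩ := hx
  rw [Set.mem_singleton_iff] at hq'
  subst hq'
  have hy0 : ⟪n, y - p₁⟫ = 0 := by
    rw [segment_eq_image'] at hy
    obtain ⟨t, -, rfl⟩ := hy
    simp [real_inner_smul_right, h0]
  obtain ⟨s, t, hs, ht, hst, rfl⟩ := hx
  have hval : ⟪n, s • q' + t • y - p₁⟫ = s * ⟪n, q' - p₁⟫ := by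
    have : s • q' + t • y - p₁ = s • (q' - p₁) + t • (y - p₁) := by
      rw [smul_sub, smul_sub]
      have : p₁ = s • p₁ + t • p₁ := by rw [← add_smul, hst, one_smul]
      nth_rw 1 [this]
      abel
    rw [this, inner_add_right, real_inner_smul_right, real_inner_smul_right, hy0]
    ring
  rcases hs.eq_or_lt with rfl | hs
  · right
    refine ⟨by rw [hval]; ring, ?_⟩
    have : t = 1 := by linarith
    subst this
    simpa using hy
  · left
    rw [hval]
    exact mul_neg_of_pos_of_neg hs hq

lemma iteratedFDeriv_two_eq_zero {φ : EuclideanSpace ℝ (Fin 2) → ℝ}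
    {x : EuclideanSpace ℝ (Fin 2)} (hx : x ∉ tsupport φ) (m : Fin 2 → EuclideanSpace ℝ (Fin 2)) :
    iteratedFDeriv ℝ 2 φ x m = 0 := by
  have : iteratedFDeriv ℝ 2 φ x = 0 :=
    image_eq_zero_of_notMem_tsupport fun h => hx (tsupport_iteratedFDeriv_subset 2 h)
  simp [this]

lemma fderiv_eq_zero_of_notMem {φ : EuclideanSpace ℝ (Fin 2) → ℝ}
    {x : EuclideanSpace ℝ (Fin 2)} (hx : x ∉ tsupport φ) (v : EuclideanSpace ℝ (Fin 2)) :
    fderiv ℝ φ x v = 0 := by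
  have : fderiv ℝ φ x = 0 :=
    image_eq_zero_of_notMem_tsupport fun h => hx (tsupport_fderiv_subset ℝ h)
  simp [this]

/-- On a region that coincides with the half-plane on the support of `φ`, Green's identity has the
same boundary term as on the half-plane. -/
lemma green_triangle (e : OrthonormalBasis (Fin 2) ℝ (EuclideanSpace ℝ (Fin 2)))
    (p : EuclideanSpace ℝ (Fin 2)) {f φ : EuclideanSpace ℝ (Fin 2) → ℝ} (hf : ContDiff ℝ 2 f)
    (hφ : ContDiff ℝ 2 φ) (hc : HasCompactSupport φ) (a b : EuclideanSpace ℝ (Fin 2))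
    {T : Set (EuclideanSpace ℝ (Fin 2))} (hT : T ⊆ {x | ⟪e 1, x - p⟫ ≤ 0})
    (hsupp : ∀ x ∈ tsupport φ, ⟪e 1, x - p⟫ ≤ 0 → x ∈ T) :
    ∫ x in T, f x * iteratedFDeriv ℝ 2 φ x ![a, b] =
      (∫ x in T, iteratedFDeriv ℝ 2 f x ![a, b] * φ x)
      + (⟪e 1, a⟫ * (∫ s : ℝ, f (p + s • e 0) * fderiv ℝ φ (p + s • e 0) b)
      - ⟪e 1, b⟫ * ∫ s : ℝ, fderiv ℝ f (p + s • e 0) a * φ (p + s • e 0)) := by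
  have hH : MeasurableSet {x | ⟪e 1, x - p⟫ ≤ 0} :=
    (isClosed_le (by fun_prop) continuous_const).measurableSet
  have hoff : ∀ x ∈ {x | ⟪e 1, x - p⟫ ≤ 0} \ T, x ∉ tsupport φ :=
    fun x hx hxs => hx.2 (hsupp x hxs hx.1)
  have h1 := setIntegral_eq_of_subset_of_forall_sdiff_eq_zero (μ := volume) hH hT
    (f := fun x => f x * iteratedFDeriv ℝ 2 φ x ![a, b])
    fun x hx => by rw [iteratedFDeriv_two_eq_zero (hoff x hx), mul_zero]
  have h2 := setIntegral_eq_of_subset_of_forall_sdiff_eq_zero (μ := volume) hH hT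
    (f := fun x => iteratedFDeriv ℝ 2 f x ![a, b] * φ x)
    fun x hx => by rw [image_eq_zero_of_notMem_tsupport (hoff x hx), mul_zero]
  rw [← h1, ← h2, green e p hf hφ hc]

/-- Arc-length integral over the full line as an integral over the parametrised edge `[p, p + d]`,
for integrands vanishing off the edge. -/
lemma integral_edge {p d v : EuclideanSpace ℝ (Fin 2)} (hd : d ≠ 0) (hv : v = ‖d‖⁻¹ • d)
    {K : EuclideanSpace ℝ (Fin 2) → ℝ} (hK : ∀ t : ℝ, t ∉ Set.Icc (0 : ℝ) 1 → K (p + t • d) = 0) :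
    ∫ s : ℝ, K (p + s • v) = ‖d‖ * ∫ t in (0 : ℝ)..1, K (p + t • d) := by
  have hd' : ‖d‖ ≠ 0 := norm_ne_zero_iff.2 hd
  have h := Measure.integral_comp_mul_left (fun s : ℝ => K (p + s • v)) ‖d‖
  have hs : ∀ t : ℝ, (‖d‖ * t) • v = t • d := by
    intro t
    rw [hv, smul_smul]
    congr 1
    field_simp
  simp only [hs] at h
  rw [intervalIntegral.integral_of_le zero_le_one, ← integral_Icc_eq_integral_Ioc,
    setIntegral_eq_integral_of_forall_compl_eq_zero hK, h, abs_of_nonneg (by positivity),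
    smul_eq_mul, mul_inv_cancel_left₀ hd']

/-- Representation formula for the distributional mixed second derivative of a piecewise
`C²` function on two adjacent triangles: an edge term carrying the normal jump of the
gradient weighted by `(n·a)(n·b)`, plus the elementwise classical second derivatives. -/
theorem piecewise_C2_distributional_second_derivative
    (p₁ p₂ p₃ p₄ : EuclideanSpace ℝ (Fin 2))
    (h₃ : AffineIndependent ℝ ![p₁, p₂, p₃])
    (h₄ : AffineIndependent ℝ ![p₁, p₂, p₄])
    (n : EuclideanSpace ℝ (Fin 2)) (hn : ‖n‖ = 1)
    (hn_orth : ⟪n, p₂ - p₁⟫ = 0)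
    (hn₄ : 0 < ⟪n, p₄ - p₁⟫) (hn₃ : ⟪n, p₃ - p₁⟫ < 0)
    (T₁ T₂ : Set (EuclideanSpace ℝ (Fin 2)))
    (hT₁ : T₁ = convexHull ℝ {p₁, p₂, p₃}) (hT₂ : T₂ = convexHull ℝ {p₁, p₂, p₄})
    (f₁ f₂ : EuclideanSpace ℝ (Fin 2) → ℝ)
    (hf₁ : ContDiff ℝ 2 f₁) (hf₂ : ContDiff ℝ 2 f₂)
    (hedge : Set.EqOn f₁ f₂ (segment ℝ p₁ p₂))
    (u : EuclideanSpace ℝ (Fin 2) → ℝ)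
    (hu₁ : Set.EqOn u f₁ T₁) (hu₂ : Set.EqOn u f₂ T₂)
    (a b : EuclideanSpace ℝ (Fin 2)) (φ : EuclideanSpace ℝ (Fin 2) → ℝ)
    (hφ : ContDiff ℝ (⊤ : ℕ∞) φ) (hφsupp : HasCompactSupport φ)
    (hφint : tsupport φ ⊆ interior (T₁ ∪ T₂)) :
    ∫ x in T₁ ∪ T₂, u x * iteratedFDeriv ℝ 2 φ x ![a, b]
      = ⟪n, a⟫ * ⟪n, b⟫ * ‖p₂ - p₁‖ *
          (∫ t in (0:ℝ)..1,
            (fderiv ℝ f₂ (p₁ + t • (p₂ - p₁)) n - fderiv ℝ f₁ (p₁ + t • (p₂ - p₁)) n) *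
              φ (p₁ + t • (p₂ - p₁)))
        + (∫ x in T₁, iteratedFDeriv ℝ 2 f₁ x ![a, b] * φ x)
        + (∫ x in T₂, iteratedFDeriv ℝ 2 f₂ x ![a, b] * φ x) := by
  have hne : p₂ - p₁ ≠ 0 := by
    intro h
    have : (1 : Fin 3) = 0 := h₃.injective (by simpa using sub_eq_zero.1 h)
    exact absurd this (by decide)
  have hφ2 : ContDiff ℝ 2 φ := hφ.of_le (by norm_cast)
  set v := ‖p₂ - p₁‖⁻¹ • (p₂ - p₁) with hv
  have hv1 : ‖v‖ = 1 := norm_smul_inv_norm (𝕜 := ℝ) hne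
  have hnv : ⟪n, v⟫ = 0 := by rw [hv, real_inner_smul_right, hn_orth, mul_zero]
  obtain ⟨e, he0, he1⟩ := exists_frame hv1 hn hnv
  obtain ⟨e', he0', he1'⟩ := exists_frame (n := -n) hv1 (by simpa using hn) (by simp [hnv])
  have hside₁ : ∀ x ∈ T₁, ⟪n, x - p₁⟫ < 0 ∨ (⟪n, x - p₁⟫ = 0 ∧ x ∈ segment ℝ p₁ p₂) :=
    fun x hx => triangle_side hn_orth hn₃ (hT₁ ▸ hx)
  have hside₂ : ∀ x ∈ T₂, 0 < ⟪n, x - p₁⟫ ∨ (⟪n, x - p₁⟫ = 0 ∧ x ∈ segment ℝ p₁ p₂) := by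
    intro x hx
    have := triangle_side (n := -n) (x := x) (by simpa using hn_orth) (by simpa using hn₄)
      (hT₂ ▸ hx)
    simpa using this
  have hseg₁ : segment ℝ p₁ p₂ ⊆ T₁ := by
    rw [hT₁, ← convexHull_pair]
    exact convexHull_mono (by intro y; simp; tauto)
  have hseg₂ : segment ℝ p₁ p₂ ⊆ T₂ := by
    rw [hT₂, ← convexHull_pair]
    exact convexHull_mono (by intro y; simp; tauto)
  have hline : ∀ x ∈ T₁ ∪ T₂, ⟪n, x - p₁⟫ = 0 → x ∈ segment ℝ p₁ p₂ := by
    rintro x (hx | hx) h0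
    · rcases hside₁ x hx with h | h
      · exact absurd h0 h.ne
      · exact h.2
    · rcases hside₂ x hx with h | h
      · exact absurd h0 h.ne'
      · exact h.2
  have hG₁ := green_triangle e p₁ hf₁ hφ2 hφsupp a b (T := T₁)
    (by
      intro x hx
      rw [Set.mem_ofPred_eq, he1]
      rcases hside₁ x hx with h | h
      · exact h.le
      · exact h.1.le)
    (by
      intro x hx h0
      rw [he1] at h0
      rcases interior_subset (hφint hx) with h | h
      · exact h
      · rcases hside₂ x h with h | h
        · exact absurd h0 (not_le.2 h)
        · exact hseg₁ h.2)
  have hG₂ := green_triangle e' p₁ hf₂ hφ2 hφsupp a b (T := T₂)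
    (by
      intro x hx
      rw [Set.mem_ofPred_eq, he1', inner_neg_left]
      rcases hside₂ x hx with h | h
      · linarith
      · linarith [h.1])
    (by
      intro x hx h0
      rw [he1', inner_neg_left] at h0
      rcases interior_subset (hφint hx) with h | h
      · rcases hside₁ x h with h | h
        · linarith
        · exact hseg₂ h.2
      · exact h)
  rw [he1, he0] at hG₁
  rw [he1', he0', inner_neg_left, inner_neg_left] at hG₂
  have hon : ∀ s : ℝ, ⟪n, p₁ + s • v - p₁⟫ = 0 := by
    intro s
    rw [add_sub_cancel_left, real_inner_smul_right, hnv, mul_zero]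
  -- the traces of `f₁` and `f₂` agree wherever `φ` lives on the line
  have hA : ∫ s : ℝ, f₁ (p₁ + s • v) * fderiv ℝ φ (p₁ + s • v) b
      = ∫ s : ℝ, f₂ (p₁ + s • v) * fderiv ℝ φ (p₁ + s • v) b := by
    congr 1
    funext s
    by_cases hx : p₁ + s • v ∈ tsupport φ
    · rw [hedge (hline _ (interior_subset (hφint hx)) (hon s))]
    · rw [fderiv_eq_zero_of_notMem hx, mul_zero, mul_zero]
  have hf₁d := hf₁.differentiable two_ne_zero
  have hf₂d := hf₂.differentiable two_ne_zero
  -- the tangential derivatives agree there as well, so only the normal jump survives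
  have hjump : ∀ s : ℝ, fderiv ℝ f₂ (p₁ + s • v) a * φ (p₁ + s • v)
      - fderiv ℝ f₁ (p₁ + s • v) a * φ (p₁ + s • v)
      = ⟪n, a⟫ * ((fderiv ℝ f₂ (p₁ + s • v) n - fderiv ℝ f₁ (p₁ + s • v) n)
        * φ (p₁ + s • v)) := by
    intro s
    by_cases hx : p₁ + s • v ∈ tsupport φ
    · have hnhds : ∀ᶠ t : ℝ in nhds s, p₁ + t • v ∈ interior (T₁ ∪ T₂) :=
        (isOpen_interior.preimage (by fun_prop : Continuous fun t : ℝ => p₁ + t • v)).mem_nhds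
          (hφint hx)
      have heq : (fun t : ℝ => f₁ (p₁ + t • v)) =ᶠ[nhds s] fun t : ℝ => f₂ (p₁ + t • v) :=
        hnhds.mono fun t ht => hedge (hline _ (interior_subset ht) (hon t))
      have htan : fderiv ℝ f₁ (p₁ + s • v) v = fderiv ℝ f₂ (p₁ + s • v) v :=
        ((deriv_line hf₁d p₁ v s).congr_of_eventuallyEq heq.symm).unique
          (deriv_line hf₂d p₁ v s)
      have ha : a = ⟪v, a⟫ • v + ⟪n, a⟫ • n := by
        conv_lhs => rw [← e.sum_repr' a, Fin.sum_univ_two, he0, he1]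
      have hexp : ∀ g : EuclideanSpace ℝ (Fin 2) →L[ℝ] ℝ,
          g a = ⟪v, a⟫ * g v + ⟪n, a⟫ * g n := by
        intro g
        conv_lhs => rw [ha]
        simp
      rw [hexp, hexp, htan]
      ring
    · rw [image_eq_zero_of_notMem_tsupport hx]
      ring
  have hBint : ∀ f : EuclideanSpace ℝ (Fin 2) → ℝ, ContDiff ℝ 2 f →
      Integrable (fun s : ℝ => fderiv ℝ f (p₁ + s • v) a * φ (p₁ + s • v)) := by
    intro f hf
    have h1 := hf.continuous_fderiv two_ne_zero
    have h2 := hφ.continuous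
    exact Continuous.integrable_of_hasCompactSupport (by fun_prop)
      (hasCompactSupport_line hφsupp p₁ hv1).mul_left
  have hB : (∫ s : ℝ, fderiv ℝ f₂ (p₁ + s • v) a * φ (p₁ + s • v))
      - (∫ s : ℝ, fderiv ℝ f₁ (p₁ + s • v) a * φ (p₁ + s • v))
      = ⟪n, a⟫ * (‖p₂ - p₁‖ * ∫ t in (0:ℝ)..1,
            (fderiv ℝ f₂ (p₁ + t • (p₂ - p₁)) n - fderiv ℝ f₁ (p₁ + t • (p₂ - p₁)) n) *
              φ (p₁ + t • (p₂ - p₁))) := by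
    rw [← integral_sub (hBint f₂ hf₂) (hBint f₁ hf₁)]
    simp only [hjump]
    rw [integral_const_mul, integral_edge (p := p₁)
      (K := fun x => (fderiv ℝ f₂ x n - fderiv ℝ f₁ x n) * φ x) hne hv]
    intro t ht
    have hx : p₁ + t • (p₂ - p₁) ∉ tsupport φ := by
      intro hx
      have := hline _ (interior_subset (hφint hx)) (by
        rw [add_sub_cancel_left, real_inner_smul_right, hn_orth, mul_zero])
      rw [segment_eq_image'] at this
      obtain ⟨r, hr, hrt⟩ := this
      have hrt' : r = t := smul_left_injective ℝ hne (add_left_cancel hrt)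
      exact ht (hrt' ▸ hr)
    rw [image_eq_zero_of_notMem_tsupport hx, mul_zero]
  have hm₁ : MeasurableSet T₁ := by
    rw [hT₁]; exact ((Set.toFinite _).isCompact_convexHull ℝ).measurableSet
  have hm₂ : MeasurableSet T₂ := by
    rw [hT₂]; exact ((Set.toFinite _).isCompact_convexHull ℝ).measurableSet
  have hdisj : AEDisjoint volume T₁ T₂ := by
    refine measure_mono_null ?_ (line_null e p₁)
    rintro x ⟨h1, h2⟩
    rw [Set.mem_ofPred_eq, he1]
    rcases hside₁ x h1 with h | h
    · rcases hside₂ x h2 with h' | h'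
      · linarith
      · exact h'.1
    · exact h.1
  have hint : ∀ f : EuclideanSpace ℝ (Fin 2) → ℝ, ContDiff ℝ 2 f →
      Integrable (fun x => f x * iteratedFDeriv ℝ 2 φ x ![a, b]) := by
    intro f hf
    refine Continuous.integrable_of_hasCompactSupport ?_ ?_
    · have := hφ2.continuous_iteratedFDeriv (m := 2) le_rfl
      have h2 := hf.continuous
      fun_prop
    · exact HasCompactSupport.intro' hφsupp (isClosed_tsupport φ) fun x hx => by
        rw [iteratedFDeriv_two_eq_zero hx, mul_zero]
  have hc₁ : Set.EqOn (fun x => f₁ x * iteratedFDeriv ℝ 2 φ x ![a, b])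
      (fun x => u x * iteratedFDeriv ℝ 2 φ x ![a, b]) T₁ := fun x hx => by
    simp only [hu₁ hx]
  have hc₂ : Set.EqOn (fun x => f₂ x * iteratedFDeriv ℝ 2 φ x ![a, b])
      (fun x => u x * iteratedFDeriv ℝ 2 φ x ![a, b]) T₂ := fun x hx => by
    simp only [hu₂ hx]
  rw [setIntegral_union₀ hdisj hm₂.nullMeasurableSet
    ((hint f₁ hf₁).integrableOn.congr_fun hc₁ hm₁) ((hint f₂ hf₂).integrableOn.congr_fun hc₂ hm₂),
    ← setIntegral_congr_fun hm₁ hc₁, ← setIntegral_congr_fun hm₂ hc₂, hG₁, hG₂, hA]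
  linear_combination ⟪n, b⟫ * hB
end
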